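/- For any prime power q and any genus g ≥ 2, the weighted sum a_{[2]}|_g := Σ_{C ∈ Hyp_g(F_q)} (1/|Aut_{F_q}(C)|) · a_2(C), where a_2(C) = q² + 1 − |C(F_{q²})|, equals (−1)^g − q^{2g}; in particular for q = 2 and g = 5 one has a_{[2]}|_5 = −1025. -/

import Mathlib

open Polynomial

noncomputable section

/-- ψ_n(A)(q) = (cx+d)^n q((ax+b)/(cx+d)) over an arbitrary field. -/
def psiF {F : Type*} [Field F] (n : ℕ) (A : Matrix (Fin 2) (Fin 2) F)
    (q : Polynomial F) : Polynomial F :=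
  ∑ i ∈ Finset.range (n + 1),
    C (q.coeff i) * (C (A 0 0) * X + C (A 0 1)) ^ i * (C (A 1 0) * X + C (A 1 1)) ^ (n - i)

/-- The affine chart y² + Qy = P is nonsingular over the algebraic closure of F. -/
def SmoothChartF {F : Type*} [Field F] (Q P : Polynomial F) : Prop :=
  ∀ x y : AlgebraicClosure F,
    ¬(y ^ 2 + aeval x Q * y - aeval x P = 0 ∧ 2 * y + aeval x Q = 0 ∧
      aeval x (derivative Q) * y - aeval x (derivative P) = 0)

/-- (Q, P) is a standard model of a hyperelliptic curve of genus g over F_q: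
the degree window 2g+1 ≤ max{2 deg Q, deg P} ≤ 2g+2 holds, both charts of the standard
projective model y² + Q(x)y = P(x) (the chart at infinity being obtained by
x ↦ 1/x, y ↦ y/x^{g+1}, i.e. reversing the coefficients of Q and P) are nonsingular over
the algebraic closure of F, and the defining equation stays irreducible over the algebraic
closure (the double cover does not split). -/
def IsHypModel {F : Type*} [Field F] (g : ℕ) (Q P : Polynomial F) : Prop :=
  2 * g + 1 ≤ max (2 * Q.natDegree) P.natDegree ∧
  max (2 * Q.natDegree) P.natDegree ≤ 2 * g + 2 ∧
  SmoothChartF Q P ∧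
  SmoothChartF (reflect (g + 1) Q) (reflect (2 * g + 2) P) ∧
  ¬∃ u : Polynomial (AlgebraicClosure F),
      u ^ 2 + Q.map (algebraMap F (AlgebraicClosure F)) * u =
        P.map (algebraMap F (AlgebraicClosure F))

/-- A standard hyperelliptic equation of genus g over F. -/
def HypEq (F : Type*) [Field F] (g : ℕ) :=
  {QP : Polynomial F × Polynomial F // IsHypModel g QP.1 QP.2}

/-- The datum (A, e, r) transforms the curve y² + Q₁y = P₁ into y² + Q₂y = P₂ via the
change of variables (x, y) ↦ ((ax+b)/(cx+d), (r(x) + e·y)/(cx+d)^{g+1}). -/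
def IsoTriple {F : Type*} [Field F] (g : ℕ) (A : Matrix (Fin 2) (Fin 2) F) (e : F)
    (r : Polynomial F) (Q₁ P₁ Q₂ P₂ : Polynomial F) : Prop :=
  e ≠ 0 ∧ r.natDegree ≤ g + 1 ∧
  C e * Q₁ = 2 * r + psiF (g + 1) A Q₂ ∧
  C (e ^ 2) * P₁ = psiF (2 * g + 2) A P₂ - r ^ 2 - psiF (g + 1) A Q₂ * r

/-- Two standard hyperelliptic equations define F-isomorphic curves. -/
def IsomRel {F : Type*} [Field F] (g : ℕ) (C₁ C₂ : HypEq F g) : Prop :=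
  ∃ (A : Matrix.GeneralLinearGroup (Fin 2) F) (e : F) (r : Polynomial F),
    IsoTriple g (A : Matrix (Fin 2) (Fin 2) F) e r C₁.1.1 C₁.1.2 C₂.1.1 C₂.1.2

/-- Hyp_g(F): the set of F-isomorphism classes of hyperelliptic curves of genus g
over F. -/
def HypClass (F : Type*) [Field F] (g : ℕ) := Quot (IsomRel (F := F) g)

/-- The triples (A, e, r) inducing an automorphism of the curve (Q, P); they map
(q−1)-to-1 onto Aut_F(C), since (A,e,r) and (λA, λ^{g+1}e, λ^{g+1}r) induce the same
automorphism, so that |Aut_F(C)| = |AutTriples| / (q−1). -/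
def AutTriples {F : Type*} [Field F] (g : ℕ) (C : HypEq F g) :=
  {Aer : Matrix.GeneralLinearGroup (Fin 2) F × F × Polynomial F //
    IsoTriple g (Aer.1 : Matrix (Fin 2) (Fin 2) F) Aer.2.1 Aer.2.2
      C.1.1 C.1.2 C.1.1 C.1.2}

/-- The number of L-points of the smooth projective model of y² + Qy = P: affine points
plus the points at infinity (solutions of y² + b_{g+1}y = a_{2g+2} in the chart at
infinity at x = 0). -/
def nPoints {F : Type*} [Field F] (g : ℕ) (L : Type*) [Field L] [Algebra F L]
    (Q P : Polynomial F) : ℕ :=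
  Nat.card {xy : L × L // xy.2 ^ 2 + aeval xy.1 Q * xy.2 = aeval xy.1 P} +
  Nat.card {y : L //
    y ^ 2 + algebraMap F L (Q.coeff (g + 1)) * y = algebraMap F L (P.coeff (2 * g + 2))}

/-!
Write an equation `y ^ 2 + Q y = P` as a pair `(Q, P)` of binary forms of degrees `n` and `2 n`. If
`y ^ 2 + Q y - P` is not a square, then a translation `y ↦ y + r` turns the pair into
`(D Q', D ^ 2 P')` for a smooth pair `(Q', P')` of degrees `m` and `2 m` and a form `D ≠ 0` of
degree `d = n - m`: the smooth pair is the normalization of the double cover and `D` is its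
conductor. Over a field with `q` elements there are `(q - 1) q ^ (m + 1)` choices of the datum
`(D, (Q', P'), r)`.

Let `L` be the quadratic extension of `F`. The excess of a pair at a point of `ℙ¹(L)` is the number
of points above it minus one, so that `-a₂` is the sum of the excesses over `ℙ¹(L)`; it vanishes on
squares. If `T n` and `S m` are the sums of the excesses at a given point over all pairs and over
the smooth pairs, and `N d` is the number of forms `D ≠ 0` of degree `d` that do not vanish there,
the decomposition above gives `T n = ∑ q ^ d * N d / (q - 1) * S m`, summed over `d + m = n`. The
values of a random form at the point are equidistributed, which determines `T n` and `N d`, and then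
`S m` follows by inverting the convolution. It remains to sum over `ℙ¹(L)` and to divide by the
order of the group of changes of coordinates, whose orbits on the smooth pairs are the isomorphism
classes.
-/

/-! ### Binary forms -/

section BinaryForms

variable {R S : Type*} [CommRing R] [CommRing S] [Algebra R S]

/-- Evaluation at `(u, v)` of the binary form of degree `n` attached to a polynomial of degree at
most `n`, that is, of its homogenization. The points `(x, 1)` give the usual evaluation and `(1, 0)`
the evaluation at infinity. -/
def formEval (n : ℕ) (u v : S) : R[X] →ₗ[R] S :=
  (MvPolynomial.aeval ![u, v]).toLinearMap ∘ₗ homogenizeLM n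

lemma formEval_eq_aeval_homogenize (n : ℕ) (u v : S) (p : R[X]) :
    formEval n u v p = MvPolynomial.aeval ![u, v] (p.homogenize n) := rfl

lemma formEval_apply (n : ℕ) (u v : S) (p : R[X]) :
    formEval n u v p =
      ∑ i ∈ Finset.range (n + 1), algebraMap R S (p.coeff i) * u ^ i * v ^ (n - i) := by
  rw [formEval_eq_aeval_homogenize, Polynomial.homogenize, map_sum,
    Finset.Nat.sum_antidiagonal_eq_sum_range_succ_mk]
  refine Finset.sum_congr rfl fun i _ => ?_
  rw [MvPolynomial.aeval_monomial]
  simp [Finsupp.prod_fintype, Fin.prod_univ_two, mul_assoc]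

lemma formEval_mul {m n : ℕ} (u v : S) {p q : R[X]} (hp : p.natDegree ≤ m)
    (hq : q.natDegree ≤ n) :
    formEval (m + n) u v (p * q) = formEval m u v p * formEval n u v q := by
  simp only [formEval_eq_aeval_homogenize, homogenize_mul p q hp hq, map_mul]

lemma formEval_zero_degree (u v : S) (p : R[X]) :
    formEval 0 u v p = algebraMap R S (p.coeff 0) := by
  simp [formEval_apply]

lemma formEval_pow {m : ℕ} (u v : S) {p : R[X]} (hp : p.natDegree ≤ m) (k : ℕ) :
    formEval (k * m) u v (p ^ k) = formEval m u v p ^ k := by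
  induction k with
  | zero => simp [formEval_zero_degree]
  | succ k ih =>
    rw [pow_succ, add_mul, one_mul, formEval_mul u v (natDegree_pow_le_of_le k hp) hp, ih, pow_succ]

lemma formEval_C_mul (n : ℕ) (u v : S) (c : R) (p : R[X]) :
    formEval n u v (C c * p) = algebraMap R S c * formEval n u v p := by
  rw [← smul_eq_C_mul, map_smul, Algebra.smul_def]

lemma formEval_two_mul (n : ℕ) (u v : S) (p : R[X]) :
    formEval n u v (2 * p) = 2 * formEval n u v p := by
  rw [two_mul, two_mul, map_add]

lemma formEval_one_right {n : ℕ} (x : S) {p : R[X]} (hp : p.natDegree ≤ n) :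
    formEval n x 1 p = aeval x p := by
  rw [aeval_eq_sum_range' (Nat.lt_succ_of_le hp), formEval_apply]
  simp [Algebra.smul_def]

lemma formEval_one_zero (n : ℕ) (p : R[X]) :
    formEval n (1 : S) 0 p = algebraMap R S (p.coeff n) := by
  rw [formEval_apply, Finset.sum_range_succ, Finset.sum_eq_zero]
  · simp
  · intro i hi
    have hi : n - i ≠ 0 := by rw [Finset.mem_range] at hi; omega
    simp [hi]

lemma formEval_smul_point (n : ℕ) (c u v : S) (p : R[X]) :
    formEval n (c * u) (c * v) p = c ^ n * formEval n u v p := by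
  simp only [formEval_apply, Finset.mul_sum]
  refine Finset.sum_congr rfl fun i hi => ?_
  have hc : c ^ n = c ^ i * c ^ (n - i) := by
    rw [← pow_add, Nat.add_sub_cancel' (Finset.mem_range_succ_iff.1 hi)]
  rw [hc, mul_pow, mul_pow]
  ring

lemma formEval_algebraMap (n : ℕ) (u v : R) (p : R[X]) :
    formEval n (algebraMap R S u) (algebraMap R S v) p = algebraMap R S (formEval n u v p) := by
  simp [formEval_apply, map_sum]

lemma formEval_one_linear (u v : S) (a b : R) :
    formEval 1 u v (C a * X + C b) = algebraMap R S a * u + algebraMap R S b * v := by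
  simp [formEval_apply, Finset.sum_range_succ, add_comm]

end BinaryForms

section Substitution

variable {F S : Type*} [Field F] [CommRing S] [Algebra F S]

lemma psiF_eq_formEval (n : ℕ) (A : Matrix (Fin 2) (Fin 2) F) (p : F[X]) :
    psiF n A p = formEval n (C (A 0 0) * X + C (A 0 1)) (C (A 1 0) * X + C (A 1 1)) p :=
  (formEval_apply ..).symm

lemma natDegree_psiF_le (n : ℕ) (A : Matrix (Fin 2) (Fin 2) F) (p : F[X]) :
    (psiF n A p).natDegree ≤ n := by
  refine natDegree_sum_le_of_forall_le _ _ fun i hi => ?_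
  have hu := natDegree_pow_le_of_le i (natDegree_linear_le (a := A 0 0) (b := A 0 1))
  have hv := natDegree_pow_le_of_le (n - i) (natDegree_linear_le (a := A 1 0) (b := A 1 1))
  have huv := natDegree_mul_le_of_le (natDegree_mul_le_of_le (natDegree_C (p.coeff i)).le hu) hv
  rw [Finset.mem_range] at hi
  exact huv.trans (by omega)

lemma formEval_psiF (n : ℕ) (A : Matrix (Fin 2) (Fin 2) F) (u v : S) (p : F[X]) :
    formEval n u v (psiF n A p) =
      formEval n (algebraMap F S (A 0 0) * u + algebraMap F S (A 0 1) * v)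
        (algebraMap F S (A 1 0) * u + algebraMap F S (A 1 1) * v) p := by
  rw [psiF, map_sum, formEval_apply]
  refine Finset.sum_congr rfl fun i hi => ?_
  obtain ⟨k, rfl⟩ := Nat.exists_eq_add_of_le (Finset.mem_range_succ_iff.1 hi)
  have hu := natDegree_linear_le (a := A 0 0) (b := A 0 1)
  have hv := natDegree_linear_le (a := A 1 0) (b := A 1 1)
  have hui := natDegree_pow_le_of_le i hu
  have hvk := natDegree_pow_le_of_le k hv
  have eu := formEval_pow u v hu i
  have ev := formEval_pow u v hv k
  rw [mul_one] at hui hvk eu ev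
  rw [Nat.add_sub_cancel_left, mul_assoc, formEval_C_mul, formEval_mul u v hui hvk, eu, ev,
    formEval_one_linear, formEval_one_linear, mul_assoc]

lemma psiF_psiF (n : ℕ) (A B : Matrix (Fin 2) (Fin 2) F) (p : F[X]) :
    psiF n A (psiF n B p) = psiF n (B * A) p := by
  rw [psiF_eq_formEval n A, formEval_psiF, psiF_eq_formEval]
  congr 2 <;> simp [Matrix.mul_apply, Fin.sum_univ_two, Polynomial.algebraMap_eq] <;> ring

lemma psiF_one {n : ℕ} {p : F[X]} (hp : p.natDegree ≤ n) : psiF n 1 p = p := by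
  simpa [psiF_eq_formEval] using formEval_one_right (X : F[X]) hp

lemma psiF_mul {m n : ℕ} (A : Matrix (Fin 2) (Fin 2) F) {p q : F[X]} (hp : p.natDegree ≤ m)
    (hq : q.natDegree ≤ n) : psiF (m + n) A (p * q) = psiF m A p * psiF n A q := by
  simp only [psiF_eq_formEval, formEval_mul _ _ hp hq]

lemma psiF_inv_psiF {n : ℕ} (A : GL (Fin 2) F) {p : F[X]} (hp : p.natDegree ≤ n) :
    psiF n (A⁻¹ : GL (Fin 2) F) (psiF n (A : Matrix (Fin 2) (Fin 2) F) p) = p := by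
  rw [psiF_psiF, ← Units.val_mul, mul_inv_cancel, Units.val_one, psiF_one hp]

lemma psiF_ne_zero {n : ℕ} (A : GL (Fin 2) F) {p : F[X]} (hp : p.natDegree ≤ n) (h0 : p ≠ 0) :
    psiF n (A : Matrix (Fin 2) (Fin 2) F) p ≠ 0 := by
  intro h
  apply h0
  rw [← psiF_inv_psiF A hp, h, psiF_eq_formEval, map_zero]

lemma psiF_swap {n : ℕ} {p : F[X]} (hp : p.natDegree ≤ n) :
    psiF n ((Matrix.GeneralLinearGroup.swap F 0 1 : GL (Fin 2) F) : Matrix (Fin 2) (Fin 2) F) p =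
      reflect n p := by
  have hdeg : (reflect n p).natDegree < n + 1 :=
    Nat.lt_succ_of_le (natDegree_reflect_le.trans (max_le le_rfl hp))
  have hswap : psiF n ((Matrix.GeneralLinearGroup.swap F 0 1 : GL (Fin 2) F) :
      Matrix (Fin 2) (Fin 2) F) p = formEval n (1 : F[X]) X p := by
    rw [psiF_eq_formEval]
    simp [Matrix.swap, PEquiv.toMatrix_apply]
  rw [hswap, formEval_apply, (reflect n p).as_sum_range_C_mul_X_pow' hdeg,
    ← Finset.sum_range_reflect]
  refine Finset.sum_congr rfl fun i hi => ?_
  have hi : i ≤ n := Finset.mem_range_succ_iff.1 hi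
  rw [Nat.add_sub_cancel, coeff_reflect, revAt_le (by omega), Nat.sub_sub_self hi]
  simp [Polynomial.algebraMap_eq]

end Substitution

/-! ### Quadratic equations and partial normalizations -/

/-- The coefficients `(Q, P)` of a quadratic equation `y² + Q y = P`. -/
abbrev QuadPair (R : Type*) [CommRing R] := R[X] × R[X]

namespace QuadPair

section CommRing

variable {R : Type*} [CommRing R]

/-- The coefficients of the equation obtained by the substitution `y ↦ y + r`. -/
def translate (r : R[X]) (v : QuadPair R) : QuadPair R := (v.1 + 2 * r, v.2 - r ^ 2 - v.1 * r)

/-- The coefficients of the equation satisfied by `D y`. -/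
def scale (D : R[X]) (v : QuadPair R) : QuadPair R := (D * v.1, D ^ 2 * v.2)

/-- `Q` and `P` are forms of degrees `n` and `2 n`. -/
def HasDegreeLE (n : ℕ) (v : QuadPair R) : Prop := v.1.natDegree ≤ n ∧ v.2.natDegree ≤ 2 * n

/-- The curve `y² + Q y = P` given by `v` is birational, through `y ↦ D y` followed by a translation
by `r`, to the one given by `w`, where `D` is a form of degree `d` and `w` has degree `m`. The value
`D = 0` is allowed: it says that `y² + Q y - P` is a square. -/
structure IsPartialNormalization (d m : ℕ) (D r : R[X]) (w v : QuadPair R) : Prop where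
  natDegree_conductor_le : D.natDegree ≤ d
  natDegree_translation_le : r.natDegree ≤ d + m
  hasDegreeLE : HasDegreeLE m w
  eq_translate_scale : v = translate r (scale D w)

/-- `v` has no partial normalization of positive degree and `y² + Q y - P` is not a square; over a
perfect field this characterizes the smooth double covers of the projective line. -/
def IsNormal (n : ℕ) (v : QuadPair R) : Prop :=
  HasDegreeLE n v ∧ ∀ ⦃d m : ℕ⦄ ⦃D r : R[X]⦄ ⦃w : QuadPair R⦄, d + m = n →
    IsPartialNormalization d m D r w v → d = 0 ∧ D ≠ 0

lemma translate_translate (r s : R[X]) (v : QuadPair R) :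
    translate r (translate s v) = translate (r + s) v := by
  ext1 <;> simp only [translate] <;> ring

lemma translate_zero (v : QuadPair R) : translate 0 v = v := by
  ext1 <;> simp [translate]

lemma translate_neg_translate (r : R[X]) (v : QuadPair R) : translate (-r) (translate r v) = v := by
  rw [translate_translate, neg_add_cancel, translate_zero]

lemma translate_injective (r : R[X]) : Function.Injective (translate r) :=
  Function.LeftInverse.injective (translate_neg_translate r)

lemma scale_scale (D E : R[X]) (v : QuadPair R) : scale D (scale E v) = scale (D * E) v := by
  ext1 <;> simp only [scale] <;> ring

lemma scale_one (v : QuadPair R) : scale 1 v = v := by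
  ext1 <;> simp [scale]

lemma zero_scale (v : QuadPair R) : scale 0 v = 0 := by
  ext1 <;> simp [scale]

lemma scale_translate (D r : R[X]) (v : QuadPair R) :
    scale D (translate r v) = translate (D * r) (scale D v) := by
  ext1 <;> simp only [scale, translate] <;> ring

lemma scale_injective [IsDomain R] {D : R[X]} (hD : D ≠ 0) :
    Function.Injective (scale D) := fun v w h => by
  obtain ⟨h₁, h₂⟩ := Prod.ext_iff.1 h
  exact Prod.ext (mul_left_cancel₀ hD h₁) (mul_left_cancel₀ (pow_ne_zero 2 hD) h₂)

lemma natDegree_two_mul_le {n : ℕ} {r : R[X]} (hr : r.natDegree ≤ n) : (2 * r).natDegree ≤ n := by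
  rw [two_mul]
  exact natDegree_add_le_of_degree_le hr hr

lemma HasDegreeLE.translate {n : ℕ} {v : QuadPair R} (hv : HasDegreeLE n v) {r : R[X]}
    (hr : r.natDegree ≤ n) : HasDegreeLE n (translate r v) := by
  have hvr : (v.1 * r).natDegree ≤ 2 * n := (natDegree_mul_le_of_le hv.1 hr).trans (by omega)
  exact ⟨natDegree_add_le_of_degree_le hv.1 (natDegree_two_mul_le hr),
    (natDegree_sub_le_of_le (natDegree_sub_le_of_le hv.2 (natDegree_pow_le_of_le 2 hr)) hvr).trans
      (by simp)⟩

lemma HasDegreeLE.scale {d m : ℕ} {v : QuadPair R} (hv : HasDegreeLE m v) {D : R[X]}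
    (hD : D.natDegree ≤ d) : HasDegreeLE (d + m) (scale D v) :=
  ⟨natDegree_mul_le_of_le hD hv.1,
    (natDegree_mul_le_of_le (natDegree_pow_le_of_le 2 hD) hv.2).trans (by omega)⟩

lemma HasDegreeLE.scale_C {n : ℕ} {v : QuadPair R} (hv : HasDegreeLE n v) (c : R) :
    HasDegreeLE n (QuadPair.scale (C c) v) := by
  simpa using hv.scale (natDegree_C c).le

lemma hasDegreeLE_zero (n : ℕ) : HasDegreeLE n (0 : QuadPair R) := by
  simp [HasDegreeLE]

namespace IsPartialNormalization

variable {d m : ℕ} {D r : R[X]} {w v : QuadPair R}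

lemma hasDegreeLE_target (h : IsPartialNormalization d m D r w v) : HasDegreeLE (d + m) v := by
  rw [h.eq_translate_scale]
  exact (h.hasDegreeLE.scale h.natDegree_conductor_le).translate h.natDegree_translation_le

lemma translate (h : IsPartialNormalization d m D r w v) {s : R[X]} (hs : s.natDegree ≤ d + m) :
    IsPartialNormalization d m D (s + r) w (translate s v) where
  natDegree_conductor_le := h.natDegree_conductor_le
  natDegree_translation_le := natDegree_add_le_of_degree_le hs h.natDegree_translation_le
  hasDegreeLE := h.hasDegreeLE
  eq_translate_scale := by rw [h.eq_translate_scale, translate_translate]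

lemma scale_C (h : IsPartialNormalization d m D r w v) (c : R) :
    IsPartialNormalization d m (C c * D) (C c * r) w (scale (C c) v) where
  natDegree_conductor_le := (natDegree_C_mul_le c D).trans h.natDegree_conductor_le
  natDegree_translation_le := (natDegree_C_mul_le c r).trans h.natDegree_translation_le
  hasDegreeLE := h.hasDegreeLE
  eq_translate_scale := by rw [h.eq_translate_scale, scale_translate, scale_scale]

lemma trans {e k : ℕ} {E s : R[X]} {u : QuadPair R}
    (h : IsPartialNormalization d (e + k) D r w v) (h' : IsPartialNormalization e k E s u w) :
    IsPartialNormalization (d + e) k (D * E) (r + D * s) u v where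
  natDegree_conductor_le :=
    natDegree_mul_le_of_le h.natDegree_conductor_le h'.natDegree_conductor_le
  natDegree_translation_le := by
    rw [add_assoc]
    exact natDegree_add_le_of_degree_le h.natDegree_translation_le
      (natDegree_mul_le_of_le h.natDegree_conductor_le h'.natDegree_translation_le)
  hasDegreeLE := h'.hasDegreeLE
  eq_translate_scale := by
    rw [h.eq_translate_scale, h'.eq_translate_scale, scale_translate, scale_scale,
      translate_translate]

lemma of_eq_translate_zero (hr : r.natDegree ≤ d + m) (hv : v = QuadPair.translate r 0) :
    IsPartialNormalization d m 0 r 0 v where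
  natDegree_conductor_le := by simp
  natDegree_translation_le := hr
  hasDegreeLE := hasDegreeLE_zero m
  eq_translate_scale := by rw [zero_scale, hv]

end IsPartialNormalization

lemma IsNormal.translate {n : ℕ} {v : QuadPair R} (hv : IsNormal n v) {r : R[X]}
    (hr : r.natDegree ≤ n) : IsNormal n (translate r v) := by
  refine ⟨hv.1.translate hr, fun d m D s w hdm h => hv.2 hdm (D := D) (r := -r + s) (w := w) ?_⟩
  have h' := h.translate (s := -r) (by rwa [natDegree_neg, hdm])
  rwa [translate_neg_translate] at h'

end CommRing

section Field

variable {F : Type*} [Field F]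

/-- The substitution `x ↦ (a x + b) / (c x + d)`, with denominators cleared, in a pair of forms of
degrees `n` and `2 n`. -/
def subst (n : ℕ) (A : Matrix (Fin 2) (Fin 2) F) (v : QuadPair F) : QuadPair F :=
  (psiF n A v.1, psiF (2 * n) A v.2)

lemma HasDegreeLE.subst (n : ℕ) (A : Matrix (Fin 2) (Fin 2) F) (v : QuadPair F) :
    HasDegreeLE n (subst n A v) :=
  ⟨natDegree_psiF_le .., natDegree_psiF_le ..⟩

lemma subst_subst (n : ℕ) (A B : Matrix (Fin 2) (Fin 2) F) (v : QuadPair F) :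
    subst n A (subst n B v) = subst n (B * A) v := by
  simp only [subst, psiF_psiF]

lemma subst_one {n : ℕ} {v : QuadPair F} (hv : HasDegreeLE n v) : subst n 1 v = v := by
  simp only [subst, psiF_one hv.1, psiF_one hv.2]

lemma subst_inv_subst {n : ℕ} (A : GL (Fin 2) F) {v : QuadPair F} (hv : HasDegreeLE n v) :
    subst n (A⁻¹ : GL (Fin 2) F) (subst n (A : Matrix (Fin 2) (Fin 2) F) v) = v := by
  simp only [subst, psiF_inv_psiF A hv.1, psiF_inv_psiF A hv.2]

lemma subst_translate {n : ℕ} (A : Matrix (Fin 2) (Fin 2) F) {v : QuadPair F}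
    (hv : HasDegreeLE n v) {r : F[X]} (hr : r.natDegree ≤ n) :
    subst n A (translate r v) = translate (psiF n A r) (subst n A v) := by
  have hr2 := formEval_pow (C (A 0 0) * X + C (A 0 1)) (C (A 1 0) * X + C (A 1 1)) hr 2
  have hvr := formEval_mul (C (A 0 0) * X + C (A 0 1)) (C (A 1 0) * X + C (A 1 1)) hv.1 hr
  rw [← two_mul] at hvr
  simp only [subst, translate, psiF_eq_formEval, map_add, map_sub, formEval_two_mul, hr2, hvr]

lemma subst_scale {d m : ℕ} (A : Matrix (Fin 2) (Fin 2) F) {D : F[X]} (hD : D.natDegree ≤ d)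
    {v : QuadPair F} (hv : HasDegreeLE m v) :
    subst (d + m) A (scale D v) = scale (psiF d A D) (subst m A v) := by
  have hD2 := formEval_pow (C (A 0 0) * X + C (A 0 1)) (C (A 1 0) * X + C (A 1 1)) hD 2
  simp only [subst, scale, mul_add 2 d m, psiF_mul A hD hv.1,
    psiF_mul A (natDegree_pow_le_of_le 2 hD) hv.2, psiF_eq_formEval, hD2]

lemma subst_scale_C {n : ℕ} (A : Matrix (Fin 2) (Fin 2) F) (c : F) {v : QuadPair F}
    (hv : HasDegreeLE n v) : subst n A (scale (C c) v) = scale (C c) (subst n A v) := by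
  have h := subst_scale A (natDegree_C c).le hv
  rwa [zero_add, psiF_eq_formEval 0, formEval_zero_degree, coeff_C_zero,
    Polynomial.algebraMap_eq] at h

lemma IsPartialNormalization.subst {d m : ℕ} {D r : F[X]} {w v : QuadPair F}
    (h : IsPartialNormalization d m D r w v) (A : Matrix (Fin 2) (Fin 2) F) :
    IsPartialNormalization d m (psiF d A D) (psiF (d + m) A r) (subst m A w)
      (subst (d + m) A v) where
  natDegree_conductor_le := natDegree_psiF_le ..
  natDegree_translation_le := natDegree_psiF_le ..
  hasDegreeLE := .subst ..
  eq_translate_scale := by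
    rw [h.eq_translate_scale,
      subst_translate A (h.hasDegreeLE.scale h.natDegree_conductor_le) h.natDegree_translation_le,
      subst_scale A h.natDegree_conductor_le h.hasDegreeLE]

lemma IsNormal.scale_C {n : ℕ} {v : QuadPair F} (hv : IsNormal n v) {c : F} (hc : c ≠ 0) :
    IsNormal n (scale (C c) v) := by
  refine ⟨hv.1.scale_C c, fun d m D s w hdm h => ?_⟩
  have h' := h.scale_C c⁻¹
  rw [scale_scale, ← C_mul, inv_mul_cancel₀ hc, C_1, scale_one] at h'
  exact (hv.2 hdm h').imp_right right_ne_zero_of_mul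

lemma IsNormal.subst {n : ℕ} {v : QuadPair F} (hv : IsNormal n v) (A : GL (Fin 2) F) :
    IsNormal n (subst n (A : Matrix (Fin 2) (Fin 2) F) v) := by
  refine ⟨.subst .., fun d m D s w hdm h => ?_⟩
  have h' := h.subst (A⁻¹ : GL (Fin 2) F)
  rw [hdm, subst_inv_subst A hv.1] at h'
  refine (hv.2 hdm h').imp_right fun hD hD0 => hD ?_
  rw [hD0, psiF_eq_formEval, map_zero]

end Field

end QuadPair

/-! ### Singular points -/

section PerfectField

variable {F K : Type*} [Field F] [Field K] [Algebra F K]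

lemma exists_eq_pow_of_derivative_eq_zero (p : ℕ) [Fact p.Prime] [CharP F p] [PerfectField F]
    {f : F[X]} (hf : derivative f = 0) : ∃ a : F[X], f = a ^ p :=
  ⟨(contract p f).map (frobeniusEquiv F p).symm, by
    rw [← polynomial_expand_eq, expand_contract p hf (Fact.out : p.Prime).ne_zero]⟩

lemma derivative_derivative_eq_zero {R : Type*} [Semiring R] [CharP R 2] (f : R[X]) :
    derivative (derivative f) = 0 := by
  have h := congrFun (factorial_smul_hasseDeriv (R := R) 2) f
  rw [Function.iterate_succ_apply, Function.iterate_one] at h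
  rw [← h, LinearMap.smul_apply, ← Nat.cast_smul_eq_nsmul R]
  simp [CharTwo.two_eq_zero]

lemma minpoly_sq_dvd_of_aeval_derivative_eq_zero [PerfectField F] [Algebra.IsAlgebraic F K]
    {f : F[X]} {x : K} (hf : aeval x f = 0) (hf' : aeval x (derivative f) = 0) :
    minpoly F x ^ 2 ∣ f := by
  obtain ⟨g, rfl⟩ := minpoly.dvd F x hf
  have hsep := (PerfectField.separable_of_irreducible
    (minpoly.irreducible (Algebra.IsIntegral.isIntegral (R := F) x))).aeval_derivative_ne_zero
      (minpoly.aeval F x)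
  have hg : aeval x g = 0 := by simpa [derivative_mul, hsep] using hf'
  rw [sq]
  exact mul_dvd_mul_left _ (minpoly.dvd F x hg)

lemma exists_aeval_eq_of_sq_eq [CharP F 2] [PerfectField F] [Algebra.IsAlgebraic F K] {x y : K}
    {p : F[X]} (h : y ^ 2 = aeval x p) : ∃ r : F[X], aeval x r = y := by
  have : PerfectField (IntermediateField.adjoin F {x}) := Algebra.IsAlgebraic.perfectField F
  have : CharP (IntermediateField.adjoin F {x}) 2 := charP_of_injective_algebraMap' F 2
  have : CharP K 2 := charP_of_injective_algebraMap' F 2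
  have hx : IsAlgebraic F x := Algebra.IsAlgebraic.isAlgebraic x
  have hadjoin (z : K) : z ∈ IntermediateField.adjoin F {x} ↔ ∃ r : F[X], aeval x r = z := by
    rw [← IntermediateField.mem_toSubalgebra,
      IntermediateField.adjoin_simple_toSubalgebra_of_isAlgebraic hx,
      Algebra.adjoin_singleton_eq_range_aeval, AlgHom.mem_range]
  obtain ⟨z, hz⟩ := surjective_frobenius (IntermediateField.adjoin F {x}) 2
    ⟨aeval x p, (hadjoin _).2 ⟨p, rfl⟩⟩
  have hzy : (z : K) ^ 2 = y ^ 2 := h ▸ congrArg Subtype.val hz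
  exact (hadjoin y).1 (CharTwo.sq_injective hzy ▸ z.2)

end PerfectField

namespace QuadPair

section CommRing

variable {R K : Type*} [CommRing R] [CommRing K] [Algebra R K]

/-- `(x, y)` is a singular point of the affine curve `y² + Q y = P`, by the Jacobian criterion. -/
def IsSingularAt (v : QuadPair R) (x y : K) : Prop :=
  y ^ 2 + aeval x v.1 * y - aeval x v.2 = 0 ∧ 2 * y + aeval x v.1 = 0 ∧
    aeval x (derivative v.1) * y - aeval x (derivative v.2) = 0

lemma IsSingularAt.of_translate {v : QuadPair R} {r : R[X]} {x y : K}
    (h : IsSingularAt (translate r v) x y) : IsSingularAt v x (y + aeval x r) := by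
  obtain ⟨h₁, h₂, h₃⟩ := h
  simp only [translate, two_mul r, sq r, map_add, map_sub, map_mul, derivative_mul] at h₁ h₂ h₃
  refine ⟨?_, ?_, ?_⟩
  · linear_combination h₁
  · linear_combination h₂
  · linear_combination h₃ - aeval x (derivative r) * h₂

lemma isSingularAt_translate {v : QuadPair R} {r : R[X]} {x y : K} :
    IsSingularAt (translate r v) x y ↔ IsSingularAt v x (y + aeval x r) := by
  refine ⟨.of_translate, fun h => ?_⟩
  rw [← translate_neg_translate r v] at h
  simpa using h.of_translate

lemma isSingularAt_scale_of_aeval_eq_zero {v : QuadPair R} {D : R[X]} {x : K}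
    (hD : aeval x D = 0) : IsSingularAt (scale D v) x 0 := by
  simp [IsSingularAt, scale, sq, derivative_mul, hD]

lemma isSingularAt_zero {v : QuadPair R} {x : K} :
    IsSingularAt v x 0 ↔
      aeval x v.1 = 0 ∧ aeval x v.2 = 0 ∧ aeval x (derivative v.2) = 0 := by
  simp [IsSingularAt, and_left_comm]

lemma IsPartialNormalization.isSingularAt {d m : ℕ} {D r : R[X]} {w v : QuadPair R}
    (h : IsPartialNormalization d m D r w v) {x : K} (hD : aeval x D = 0) :
    IsSingularAt v x (-aeval x r) := by
  rw [h.eq_translate_scale, isSingularAt_translate, neg_add_cancel]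
  exact isSingularAt_scale_of_aeval_eq_zero hD

end CommRing

section Field

variable {F K : Type*} [Field F] [Field K] [Algebra F K]

lemma IsSingularAt.of_scale {v : QuadPair F} {D : F[X]} {x y : K}
    (h : IsSingularAt (scale D v) x y) (hD : aeval x D ≠ 0) :
    IsSingularAt v x (y / aeval x D) := by
  obtain ⟨z, rfl⟩ : ∃ z, y = aeval x D * z := ⟨y / aeval x D, by field_simp⟩
  obtain ⟨h₁, h₂, h₃⟩ := h
  simp only [scale, sq D, map_add, map_mul, derivative_mul] at h₁ h₂ h₃
  rw [mul_div_cancel_left₀ z hD]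
  refine ⟨mul_left_cancel₀ (pow_ne_zero 2 hD) ?_, mul_left_cancel₀ hD ?_,
    mul_left_cancel₀ (pow_ne_zero 3 hD) ?_⟩
  · linear_combination h₁
  · linear_combination h₂
  · linear_combination aeval x D * h₃ - 2 * aeval x (derivative D) * h₁ +
      aeval x (derivative D) * z * aeval x D * h₂

lemma exists_eq_scale_minpoly [PerfectField F] [Algebra.IsAlgebraic F K] {v : QuadPair F} {x : K}
    (h : IsSingularAt v x 0) : ∃ w, v = scale (minpoly F x) w := by
  obtain ⟨hQ, hP, hP'⟩ := isSingularAt_zero.1 h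
  obtain ⟨a, ha⟩ := minpoly.dvd F x hQ
  obtain ⟨b, hb⟩ := minpoly_sq_dvd_of_aeval_derivative_eq_zero hP hP'
  exact ⟨(a, b), Prod.ext ha hb⟩

lemma HasDegreeLE.of_scale {d m : ℕ} {D : F[X]} (hD : d ≤ D.natDegree) (hD0 : D ≠ 0)
    {w : QuadPair F} (hw : HasDegreeLE (d + m) (QuadPair.scale D w)) : HasDegreeLE m w := by
  obtain ⟨h₁, h₂⟩ := hw
  constructor
  · by_cases h : w.1 = 0
    · simp [h]
    · rw [QuadPair.scale, natDegree_mul hD0 h] at h₁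
      omega
  · by_cases h : w.2 = 0
    · simp [h]
    · rw [QuadPair.scale, natDegree_mul (pow_ne_zero 2 hD0) h, natDegree_pow] at h₂
      omega

lemma eq_zero_of_hasDegreeLE_scale {n : ℕ} {D : F[X]} (hD : n < D.natDegree) {w : QuadPair F}
    (hw : HasDegreeLE n (scale D w)) : scale D w = 0 := by
  refine Prod.ext (eq_zero_of_dvd_of_natDegree_lt (dvd_mul_right ..) (hw.1.trans_lt hD))
    (eq_zero_of_dvd_of_natDegree_lt (dvd_mul_right ..) (hw.2.trans_lt ?_))
  rw [natDegree_pow]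
  omega

lemma completeSquare_isSingularAt (h2 : (2 : F) ≠ 0) {v : QuadPair F} {x y : K}
    (h : IsSingularAt v x y) : IsSingularAt (translate (C (-2⁻¹) * v.1) v) x (0 : K) := by
  rw [isSingularAt_translate]
  convert h using 1
  have h2K : (2 : K) ≠ 0 := by
    rwa [← map_ofNat (algebraMap F K) 2, _root_.map_ne_zero]
  have hy := h.2.1
  simp only [map_mul, aeval_C, map_neg, map_inv₀, map_ofNat]
  field_simp
  linear_combination -hy

lemma exists_translate_isSingularAt_zero [PerfectField F] [Algebra.IsAlgebraic F K]
    {v : QuadPair F} {x y : K} (h : IsSingularAt v x y) :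
    ∃ r, IsSingularAt (translate r v) x (0 : K) := by
  by_cases h2 : (2 : F) = 0
  · have : CharP F 2 := CharTwo.of_one_ne_zero_of_two_eq_zero one_ne_zero h2
    have : CharP K 2 := charP_of_injective_algebraMap' F 2
    have hQ : aeval x v.1 = 0 := by simpa [CharTwo.two_eq_zero] using h.2.1
    obtain ⟨r, rfl⟩ := exists_aeval_eq_of_sq_eq (p := v.2)
      (show y ^ 2 = aeval x v.2 by linear_combination h.1 - y * hQ)
    exact ⟨r, isSingularAt_translate.2 (by rwa [zero_add])⟩
  · exact ⟨_, completeSquare_isSingularAt h2 h⟩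

lemma eq_translate_zero_of_translate_eq_zero {v : QuadPair F} {r : F[X]}
    (h : translate r v = 0) : v = translate (-r) 0 := by
  rw [← h, translate_neg_translate]

lemma exists_eq_translate_zero_of_two_eq_zero [PerfectField F] [Algebra.IsAlgebraic F K]
    [CharP F 2] {n : ℕ} {v : QuadPair F} (hv : HasDegreeLE n v) {x y : K}
    (h : IsSingularAt v x y) (hx : n < (minpoly F x).natDegree) :
    ∃ r : F[X], r.natDegree ≤ n ∧ v = translate r 0 := by
  have hK : CharP K 2 := charP_of_injective_algebraMap' F 2
  have hx' : IsIntegral F x := Algebra.IsIntegral.isIntegral x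
  obtain ⟨-, h₂, h₃⟩ := h
  have hQ : v.1 = 0 := eq_zero_of_dvd_of_natDegree_lt
    (minpoly.dvd F x (by simpa [CharTwo.two_eq_zero] using h₂)) (hv.1.trans_lt hx)
  have hdvd : minpoly F x ∣ derivative v.2 := minpoly.dvd F x (by simpa [hQ] using h₃)
  obtain ⟨a, ha⟩ := exists_eq_pow_of_derivative_eq_zero 2 (derivative_derivative_eq_zero v.2)
  have ha0 : a = 0 := by
    refine eq_zero_of_dvd_of_natDegree_lt
      ((minpoly.prime hx').dvd_of_dvd_pow (ha ▸ hdvd)) (lt_of_le_of_lt ?_ hx)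
    have hdeg := natDegree_derivative_le v.2
    have hP := hv.2
    rw [ha, natDegree_pow] at hdeg
    omega
  obtain ⟨r, hr⟩ := exists_eq_pow_of_derivative_eq_zero 2 (f := v.2) (by simp [ha, ha0])
  refine ⟨r, ?_, ?_⟩
  · have hP := hv.2
    rw [hr, natDegree_pow] at hP
    omega
  · ext1
    · simp [translate, hQ, CharTwo.two_eq_zero]
    · simp [translate, hr, CharTwo.neg_eq]

/-- Otherwise the conjugates of the singular point are too many for the degrees. -/
lemma exists_eq_translate_zero_of_lt_natDegree_minpoly [PerfectField F] [Algebra.IsAlgebraic F K]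
    {n : ℕ} {v : QuadPair F} (hv : HasDegreeLE n v) {x y : K} (h : IsSingularAt v x y)
    (hx : n < (minpoly F x).natDegree) : ∃ r : F[X], r.natDegree ≤ n ∧ v = translate r 0 := by
  by_cases h2 : (2 : F) = 0
  · have : CharP F 2 := CharTwo.of_one_ne_zero_of_two_eq_zero one_ne_zero h2
    exact exists_eq_translate_zero_of_two_eq_zero hv h hx
  · have hr : (C (-2⁻¹) * v.1).natDegree ≤ n := (natDegree_C_mul_le _ _).trans hv.1
    obtain ⟨w, hw⟩ := exists_eq_scale_minpoly (completeSquare_isSingularAt h2 h)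
    refine ⟨-(C (-2⁻¹) * v.1), by rwa [natDegree_neg], eq_translate_zero_of_translate_eq_zero ?_⟩
    rw [hw]
    exact eq_zero_of_hasDegreeLE_scale hx (hw ▸ hv.translate hr)

lemma exists_isPartialNormalization_minpoly [PerfectField F] [Algebra.IsAlgebraic F K] {m : ℕ}
    {v : QuadPair F} {x y : K} (hv : HasDegreeLE ((minpoly F x).natDegree + m) v)
    (h : IsSingularAt v x y) :
    ∃ r w, IsPartialNormalization (minpoly F x).natDegree m (minpoly F x) r w v := by
  have hx : IsIntegral F x := Algebra.IsIntegral.isIntegral x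
  obtain ⟨r₀, hr₀⟩ := exists_translate_isSingularAt_zero h
  set r := r₀ %ₘ minpoly F x
  have hr : r.natDegree ≤ (minpoly F x).natDegree + m :=
    (natDegree_modByMonic_lt r₀ (minpoly.monic hx) (minpoly.ne_one F x)).le.trans (by omega)
  have hr_sing : IsSingularAt (translate r v) x (0 : K) := by
    rwa [isSingularAt_translate, aeval_modByMonic_eq_self_of_root (minpoly.aeval F x),
      ← isSingularAt_translate]
  obtain ⟨w, hw⟩ := exists_eq_scale_minpoly hr_sing
  exact ⟨-r, w, le_rfl, by rwa [natDegree_neg],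
    .of_scale le_rfl (minpoly.ne_zero hx) (hw ▸ hv.translate hr),
    by rw [← hw, translate_neg_translate]⟩

lemma IsNormal.not_isSingularAt [PerfectField F] [Algebra.IsAlgebraic F K] {n : ℕ}
    {v : QuadPair F} (hv : IsNormal n v) (x y : K) : ¬IsSingularAt v x y := fun h => by
  rcases lt_or_ge n (minpoly F x).natDegree with hx | hx
  · obtain ⟨r, hr, rfl⟩ := exists_eq_translate_zero_of_lt_natDegree_minpoly hv.1 h hx
    exact (hv.2 (zero_add n) (.of_eq_translate_zero (by rwa [zero_add]) rfl)).2 rfl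
  · obtain ⟨m, rfl⟩ := Nat.exists_eq_add_of_le hx
    obtain ⟨r, w, hpn⟩ := exists_isPartialNormalization_minpoly hv.1 h
    exact (minpoly.natDegree_pos (Algebra.IsIntegral.isIntegral x)).ne' (hv.2 rfl hpn).1

end Field

end QuadPair

/-! ### Smooth models are normal -/

namespace QuadPair

section SmoothModel

variable {F : Type*} [Field F]

lemma subst_swap {n : ℕ} {v : QuadPair F} (hv : HasDegreeLE n v) :
    subst n (Matrix.GeneralLinearGroup.swap F 0 1 : GL (Fin 2) F) v =
      (reflect n v.1, reflect (2 * n) v.2) := by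
  rw [subst, psiF_swap hv.1, psiF_swap hv.2]

/-- The singularity lies over a zero of the conductor `D`, at infinity if `D` has degree less
than `d`. -/
lemma IsPartialNormalization.exists_isSingularAt (K : Type*) [Field K] [IsAlgClosed K]
    [Algebra F K] {d m : ℕ} {D r : F[X]} {w v : QuadPair F}
    (h : IsPartialNormalization d m D r w v) (hd : d ≠ 0) :
    (∃ x y : K, IsSingularAt v x y) ∨
      ∃ y : K, IsSingularAt (reflect (d + m) v.1, reflect (2 * (d + m)) v.2) 0 y := by
  by_cases hD : D.natDegree = 0
  · obtain ⟨c, rfl⟩ := natDegree_eq_zero.1 hD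
    right
    rw [← subst_swap h.hasDegreeLE_target]
    refine ⟨_, (h.subst _).isSingularAt ?_⟩
    rw [psiF_swap ((natDegree_C c).trans_le d.zero_le), reflect_C]
    simp [hd]
  · left
    obtain ⟨x, hx⟩ := IsAlgClosed.exists_root (D.map (algebraMap F K)) <| by
      rw [degree_map]
      exact fun h0 => hD (natDegree_eq_of_degree_eq_some h0)
    rw [IsRoot.def, eval_map_algebraMap] at hx
    exact ⟨x, _, h.isSingularAt hx⟩

lemma isSingularAt_map {K : Type*} [Field K] [Algebra F K] {v : QuadPair F} {x y : K} :
    IsSingularAt (v.1.map (algebraMap F K), v.2.map (algebraMap F K)) x y ↔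
      IsSingularAt v x y := by
  simp only [IsSingularAt, derivative_map, aeval_map_algebraMap]

lemma natDegree_le_of_sq_add_mul_eq {n : ℕ} {Q P u : F[X]} (hQ : Q.natDegree ≤ n)
    (hP : P.natDegree ≤ 2 * n) (hu : u ^ 2 + Q * u = P) : u.natDegree ≤ n := by
  by_contra! hlt
  have hsum : (u + Q).natDegree = u.natDegree :=
    natDegree_add_eq_left_of_natDegree_lt (hQ.trans_lt hlt)
  have hmul : (u * (u + Q)).natDegree = 2 * u.natDegree := by
    rw [natDegree_mul (ne_zero_of_natDegree_gt hlt)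
      (ne_zero_of_natDegree_gt (hsum.symm ▸ hlt)), hsum, two_mul]
  rw [← hu, show u ^ 2 + Q * u = u * (u + Q) by ring, hmul] at hP
  omega

lemma isPartialNormalization_of_sq_add_mul_eq {n : ℕ} {Q P u : F[X]} (hQ : Q.natDegree ≤ n)
    (hP : P.natDegree ≤ 2 * n) (hu : u ^ 2 + Q * u = P) :
    IsPartialNormalization n 0 (Q + 2 * u) (-u) (1, 0) (Q, P) where
  natDegree_conductor_le := natDegree_add_le_of_degree_le hQ
    (natDegree_two_mul_le (natDegree_le_of_sq_add_mul_eq hQ hP hu))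
  natDegree_translation_le := by
    rw [natDegree_neg]
    exact natDegree_le_of_sq_add_mul_eq hQ hP hu
  hasDegreeLE := by simp [HasDegreeLE]
  eq_translate_scale := by
    ext1 <;> simp only [translate, scale, ← hu] <;> ring

lemma isNormal_of_smooth {g : ℕ} {v : QuadPair F} (hv : HasDegreeLE (g + 1) v)
    (h₁ : SmoothChartF v.1 v.2)
    (h₂ : SmoothChartF (reflect (g + 1) v.1) (reflect (2 * (g + 1)) v.2)) :
    IsNormal (g + 1) v := by
  have hd {d m : ℕ} {D r : F[X]} {w : QuadPair F} (hdm : d + m = g + 1)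
      (h : IsPartialNormalization d m D r w v) : d = 0 := by
    by_contra hd
    rcases h.exists_isSingularAt (AlgebraicClosure F) hd with ⟨x, y, hxy⟩ | ⟨y, hy⟩
    · exact h₁ x y hxy
    · rw [hdm] at hy
      exact h₂ 0 y hy
  refine ⟨hv, fun d m D r w hdm h => ⟨hd hdm h, ?_⟩⟩
  rintro rfl
  have hsq : v = QuadPair.translate r 0 := by rw [h.eq_translate_scale, zero_scale]
  have hr : r.natDegree ≤ 1 + g := h.natDegree_translation_le.trans (by omega)
  exact one_ne_zero (hd (add_comm 1 g) (.of_eq_translate_zero hr hsq))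

lemma not_exists_split_of_smooth {n : ℕ} (hn : n ≠ 0) {v : QuadPair F} (hv : HasDegreeLE n v)
    (h₁ : SmoothChartF v.1 v.2) (h₂ : SmoothChartF (reflect n v.1) (reflect (2 * n) v.2)) :
    ¬∃ u : (AlgebraicClosure F)[X], u ^ 2 + v.1.map (algebraMap F (AlgebraicClosure F)) * u =
      v.2.map (algebraMap F (AlgebraicClosure F)) := by
  rintro ⟨u, hu⟩
  have hpn := isPartialNormalization_of_sq_add_mul_eq (natDegree_map_le.trans hv.1)
    (natDegree_map_le.trans hv.2) hu
  rcases hpn.exists_isSingularAt (AlgebraicClosure F) hn with ⟨x, y, hxy⟩ | ⟨y, hy⟩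
  · exact h₁ x y (isSingularAt_map.1 hxy)
  · rw [add_zero, reflect_map, reflect_map] at hy
    exact h₂ 0 y (isSingularAt_map (v := (reflect n v.1, reflect (2 * n) v.2)).1 hy)

lemma IsNormal.lt_max_natDegree {g : ℕ} {v : QuadPair F} (hv : IsNormal (g + 1) v) :
    2 * g < max (2 * v.1.natDegree) v.2.natDegree := by
  by_contra! hlt
  have hpn : IsPartialNormalization 1 g 1 0 v v :=
    ⟨by simp, by simp, ⟨by omega, by omega⟩, by rw [scale_one, translate_zero]⟩
  exact one_ne_zero (hv.2 (add_comm 1 g) hpn).1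

theorem isHypModel_iff [PerfectField F] {g : ℕ} {Q P : F[X]} :
    IsHypModel g Q P ↔ IsNormal (g + 1) (Q, P) := by
  constructor
  · rintro ⟨-, hdeg, h₁, h₂, -⟩
    rw [max_le_iff] at hdeg
    exact isNormal_of_smooth ⟨by simp only; omega, hdeg.2⟩ h₁ h₂
  · intro h
    have hle : max (2 * Q.natDegree) P.natDegree ≤ 2 * g + 2 :=
      max_le (Nat.mul_le_mul_left 2 h.1.1) h.1.2
    have h₁ : SmoothChartF Q P := h.not_isSingularAt
    have h₂ : SmoothChartF (reflect (g + 1) Q) (reflect (2 * (g + 1)) P) := by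
      have hswap := h.subst (Matrix.GeneralLinearGroup.swap F 0 1)
      rw [subst_swap h.1] at hswap
      exact hswap.not_isSingularAt
    have hsplit := not_exists_split_of_smooth g.succ_ne_zero h.1 h₁ h₂
    exact ⟨h.lt_max_natDegree, hle, h₁, h₂, hsplit⟩

end SmoothModel

end QuadPair

/-! ### Existence and uniqueness of the normalization -/

section Divisibility

variable {R F : Type*} [CommRing R] [Field F]

/-- The quotient `r / G` is a root of a monic quadratic polynomial. -/
lemma dvd_of_sq_dvd_sq_add_mul [IsDomain R] [IsIntegrallyClosed R] {G r s : R} (hG : G ≠ 0)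
    (h : G ^ 2 ∣ r ^ 2 + G * s * r) : G ∣ r := by
  obtain ⟨k, hk⟩ := h
  have hGK : algebraMap R (FractionRing R) G ≠ 0 := by
    rwa [Ne, FaithfulSMul.algebraMap_eq_zero_iff]
  have hint : IsIntegral R (algebraMap R (FractionRing R) r / algebraMap R (FractionRing R) G) := by
    refine ⟨X ^ 2 + (C s * X - C k), monic_X_pow_add (by compute_degree!), ?_⟩
    have hk' := congrArg (algebraMap R (FractionRing R)) hk
    simp only [map_add, map_mul, map_pow] at hk'
    simp only [eval₂_add, eval₂_sub, eval₂_mul, eval₂_pow, eval₂_X, eval₂_C]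
    field_simp
    linear_combination hk'
  obtain ⟨t, ht⟩ := IsIntegrallyClosed.isIntegral_iff.1 hint
  refine ⟨t, FaithfulSMul.algebraMap_injective R (FractionRing R) ?_⟩
  rw [map_mul, ht, mul_div_cancel₀ _ hGK]

/-- Dividing forms of degrees `d` and `e`, one compares the orders of vanishing at infinity. -/
lemma natDegree_add_le_of_reflect_dvd {d e : ℕ} {p q : R[X]} (hq0 : q ≠ 0) (hp : p.natDegree ≤ d)
    (hq : q.natDegree ≤ e) (h : reflect d p ∣ reflect e q) :
    q.natDegree + d ≤ p.natDegree + e := by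
  have hX : X ^ (d - p.natDegree) ∣ reflect d p := X_pow_dvd_iff.2 fun k hk => by
    rw [coeff_reflect, revAt_le (by omega), coeff_eq_zero_of_natDegree_lt (by omega)]
  by_contra! hlt
  refine leadingCoeff_ne_zero.2 hq0 ?_
  have hcoeff := X_pow_dvd_iff.1 (hX.trans h) (e - q.natDegree) (by omega)
  rwa [coeff_reflect, revAt_le (Nat.sub_le ..), Nat.sub_sub_self hq] at hcoeff

end Divisibility

namespace QuadPair

section Field

variable {F : Type*} [Field F]

/-- The normalization of the curve given by `v` is the one given by `w`, with conductor `D`. -/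
structure IsNormalization (d m : ℕ) (D r : F[X]) (w v : QuadPair F) : Prop
    extends IsPartialNormalization d m D r w v where
  conductor_ne_zero : D ≠ 0
  isNormal : IsNormal m w

lemma IsPartialNormalization.trans_isNormalization {d e k : ℕ} {D E r s : F[X]}
    {u w v : QuadPair F} (h : IsPartialNormalization d (e + k) D r w v) (hD : D ≠ 0)
    (h' : IsNormalization e k E s u w) : IsNormalization (d + e) k (D * E) (r + D * s) u v :=
  ⟨h.trans h'.toIsPartialNormalization, mul_ne_zero hD h'.conductor_ne_zero, h'.isNormal⟩

lemma IsNormal.isNormalization {n : ℕ} {v : QuadPair F} (hv : IsNormal n v) :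
    IsNormalization 0 n 1 0 v v :=
  ⟨⟨by simp, by simp, hv.1, by rw [scale_one, translate_zero]⟩, one_ne_zero, hv⟩

theorem exists_isNormalization {n : ℕ} {v : QuadPair F} (hv : HasDegreeLE n v) :
    (∃ r : F[X], r.natDegree ≤ n ∧ v = translate r 0) ∨
      ∃ d m D r w, d + m = n ∧ IsNormalization d m D r w v := by
  induction n using Nat.strong_induction_on generalizing v with
  | _ n ih =>
    by_cases hnormal : IsNormal n v
    · exact .inr ⟨0, n, 1, 0, v, zero_add n, hnormal.isNormalization⟩
    obtain ⟨d, m, D, r, w, rfl, h, hdD⟩ : ∃ d m D r w, d + m = n ∧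
        IsPartialNormalization d m D r w v ∧ ¬(d = 0 ∧ D ≠ 0) := by
      simpa only [IsNormal, hv, true_and, not_forall, exists_prop] using hnormal
    rcases eq_or_ne D 0 with rfl | hD
    · exact .inl ⟨r, h.natDegree_translation_le, by rw [h.eq_translate_scale, zero_scale]⟩
    have hd : d ≠ 0 := fun hd => hdD ⟨hd, hD⟩
    rcases ih m (by omega) h.hasDegreeLE with ⟨s, hs, hw⟩ | ⟨e, k, E, s, u, rfl, hw⟩
    · have hsq := h.trans (e := m) (k := 0) (.of_eq_translate_zero hs hw)
      rw [mul_zero] at hsq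
      exact .inl ⟨_, hsq.natDegree_translation_le, by rw [hsq.eq_translate_scale, zero_scale]⟩
    · exact .inr ⟨_, k, _, _, u, add_assoc d e k, h.trans_isNormalization hD hw⟩

lemma IsNormalization.subst {d m : ℕ} {D r : F[X]} {w v : QuadPair F}
    (h : IsNormalization d m D r w v) (A : GL (Fin 2) F) :
    IsNormalization d m (psiF d (A : Matrix (Fin 2) (Fin 2) F) D)
      (psiF (d + m) (A : Matrix (Fin 2) (Fin 2) F) r) (subst m A w) (subst (d + m) A v) :=
  ⟨h.toIsPartialNormalization.subst A, psiF_ne_zero A h.natDegree_conductor_le h.conductor_ne_zero,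
    h.isNormal.subst A⟩

lemma isUnit_of_isCoprime_of_scale_eq [PerfectField F] {m : ℕ} {E₁ E₂ s : F[X]}
    {w₁ w₂ : QuadPair F} (hE : IsCoprime E₁ E₂) (hw₂ : IsNormal m w₂)
    (h : scale E₁ w₁ = translate s (scale E₂ w₂)) : IsUnit E₁ := by
  by_contra hunit
  obtain ⟨x, hx⟩ := IsAlgClosed.exists_root (E₁.map (algebraMap F (AlgebraicClosure F))) <| by
    rw [degree_map]
    exact fun h0 => hunit (isUnit_iff_degree_eq_zero.2 h0)
  rw [IsRoot.def, eval_map_algebraMap] at hx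
  have hxE₂ : aeval x E₂ ≠ 0 := fun hxE₂ => by
    obtain ⟨a, b, hab⟩ := hE
    simpa [hx, hxE₂] using congrArg (aeval x) hab
  have hsing := isSingularAt_scale_of_aeval_eq_zero (v := w₁) hx
  rw [h, isSingularAt_translate] at hsing
  exact hw₂.not_isSingularAt x _ (hsing.of_scale hxE₂)

lemma dvd_of_scale_eq [PerfectField F] {m : ℕ} {D₁ D₂ r : F[X]} {w₁ w₂ : QuadPair F}
    (hD₁ : D₁ ≠ 0) (hw₂ : IsNormal m w₂) (h : scale D₁ w₁ = translate r (scale D₂ w₂)) :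
    D₁ ∣ D₂ ∧ D₁ ∣ r := by
  classical
  let _ := EuclideanDomain.gcdMonoid F[X]
  obtain ⟨E₁, E₂, hE₁, hE₂, hco⟩ := extract_gcd D₁ D₂
  rw [gcd_isUnit_iff] at hco
  set G := GCDMonoid.gcd D₁ D₂
  have hG : G ≠ 0 := left_ne_zero_of_mul (hE₁ ▸ hD₁)
  clear_value G
  subst hE₁ hE₂
  obtain ⟨s, rfl⟩ : G ∣ r := by
    refine dvd_of_sq_dvd_sq_add_mul (s := E₂ * w₂.1) hG ⟨E₂ ^ 2 * w₂.2 - E₁ ^ 2 * w₁.2, ?_⟩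
    have hP := congrArg Prod.snd h
    simp only [scale, translate] at hP
    linear_combination hP
  have h' : scale E₁ w₁ = translate s (scale E₂ w₂) :=
    scale_injective hG (by rwa [scale_scale, scale_translate, scale_scale])
  have hunit := isUnit_of_isCoprime_of_scale_eq hco hw₂ h'
  exact ⟨mul_dvd_mul_left G hunit.dvd, mul_dvd_mul_left G hunit.dvd⟩

namespace IsNormalization

variable [PerfectField F] {d₁ m₁ d₂ m₂ : ℕ} {D₁ D₂ r₁ r₂ : F[X]} {w₁ w₂ v : QuadPair F}

lemma conductor_dvd (h₁ : IsNormalization d₁ m₁ D₁ r₁ w₁ v)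
    (h₂ : IsNormalization d₂ m₂ D₂ r₂ w₂ v) : D₁ ∣ D₂ ∧ D₁ ∣ r₂ - r₁ := by
  refine dvd_of_scale_eq (w₁ := w₁) h₁.conductor_ne_zero h₂.isNormal (translate_injective r₁ ?_)
  rw [translate_translate, add_sub_cancel, ← h₁.eq_translate_scale, h₂.eq_translate_scale]

lemma reflect_conductor_dvd (h₁ : IsNormalization d₁ m₁ D₁ r₁ w₁ v)
    (h₂ : IsNormalization d₂ m₂ D₂ r₂ w₂ v) (hn : d₂ + m₂ = d₁ + m₁) :
    reflect d₁ D₁ ∣ reflect d₂ D₂ ∧ reflect d₁ D₁ ∣ reflect (d₁ + m₁) (r₂ - r₁) := by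
  have h₂' := h₂.subst (Matrix.GeneralLinearGroup.swap F 0 1)
  have hr₂ := h₂.natDegree_translation_le
  rw [hn] at h₂' hr₂
  have hdvd := (h₁.subst (Matrix.GeneralLinearGroup.swap F 0 1)).conductor_dvd h₂'
  rwa [psiF_swap h₁.natDegree_conductor_le, psiF_swap h₂.natDegree_conductor_le,
    psiF_swap h₁.natDegree_translation_le, psiF_swap hr₂, ← reflect_sub] at hdvd

lemma natDegree_conductor_eq (h₁ : IsNormalization d₁ m₁ D₁ r₁ w₁ v)
    (h₂ : IsNormalization d₂ m₂ D₂ r₂ w₂ v) : D₁.natDegree = D₂.natDegree :=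
  le_antisymm (natDegree_le_of_dvd (h₁.conductor_dvd h₂).1 h₂.conductor_ne_zero)
    (natDegree_le_of_dvd (h₂.conductor_dvd h₁).1 h₁.conductor_ne_zero)

lemma degree_conductor_le (h₁ : IsNormalization d₁ m₁ D₁ r₁ w₁ v)
    (h₂ : IsNormalization d₂ m₂ D₂ r₂ w₂ v) (hn : d₂ + m₂ = d₁ + m₁) : d₁ ≤ d₂ := by
  have hle := natDegree_add_le_of_reflect_dvd h₂.conductor_ne_zero h₁.natDegree_conductor_le
    h₂.natDegree_conductor_le (h₁.reflect_conductor_dvd h₂ hn).1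
  have heq := h₁.natDegree_conductor_eq h₂
  omega

theorem unique (h₁ : IsNormalization d₁ m₁ D₁ r₁ w₁ v) (h₂ : IsNormalization d₂ m₂ D₂ r₂ w₂ v)
    (hn : d₂ + m₂ = d₁ + m₁) :
    d₂ = d₁ ∧ ∃ a : F, a ≠ 0 ∧ D₂ = C a * D₁ ∧
      ∃ t : F[X], t.natDegree ≤ m₁ ∧ r₂ = r₁ + D₁ * t := by
  refine ⟨(h₂.degree_conductor_le h₁ hn.symm).antisymm (h₁.degree_conductor_le h₂ hn), ?_⟩
  obtain ⟨⟨c, hc⟩, ⟨t, ht⟩⟩ := h₁.conductor_dvd h₂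
  have hc0 : c ≠ 0 := right_ne_zero_of_mul (hc ▸ h₂.conductor_ne_zero)
  have hcdeg : c.natDegree = 0 := by
    have heq := h₁.natDegree_conductor_eq h₂
    rw [hc, natDegree_mul h₁.conductor_ne_zero hc0] at heq
    omega
  obtain ⟨a, rfl⟩ := natDegree_eq_zero.1 hcdeg
  refine ⟨a, C_ne_zero.1 hc0, by rw [hc, mul_comm], t, ?_, (sub_eq_iff_eq_add'.1 ht)⟩
  rcases eq_or_ne t 0 with rfl | ht0
  · simp
  have hr : (r₂ - r₁).natDegree ≤ d₁ + m₁ :=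
    (natDegree_sub_le_of_le (hn ▸ h₂.natDegree_translation_le) h₁.natDegree_translation_le).trans
      (max_self _).le
  have hDt : D₁ * t ≠ 0 := mul_ne_zero h₁.conductor_ne_zero ht0
  have hle := natDegree_add_le_of_reflect_dvd (ht ▸ hDt) h₁.natDegree_conductor_le hr
    (h₁.reflect_conductor_dvd h₂ hn).2
  rw [ht, natDegree_mul h₁.conductor_ne_zero ht0] at hle
  omega

end IsNormalization

end Field

end QuadPair

/-! ### Counting forms and pairs of forms -/

section Equidistribution

lemma natCast_card_sub_one_ne_zero (α : Type*) [Fintype α] [Nontrivial α] :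
    (Fintype.card α : ℚ) - 1 ≠ 0 :=
  sub_ne_zero.2 (by exact_mod_cast Fintype.one_lt_card.ne')

lemma card_mul_sum_comp {G H : Type*} [AddGroup G] [AddGroup H] [Fintype G] [Fintype H]
    (φ : G →+ H) (hφ : Function.Surjective φ) (f : H → ℚ) :
    (Fintype.card H : ℚ) * ∑ x, f (φ x) = Fintype.card G * ∑ y, f y := by
  have hshift (y : H) : ∑ x, f (φ x) = ∑ x, f (φ x + y) := by
    obtain ⟨x₀, rfl⟩ := hφ y
    rw [← Equiv.sum_comp (Equiv.addRight x₀)]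
    simp
  have hsum (x : G) : ∑ y, f (φ x + y) = ∑ y, f y := Equiv.sum_comp (Equiv.addLeft (φ x)) f
  calc (Fintype.card H : ℚ) * ∑ x, f (φ x) = ∑ y : H, ∑ x, f (φ x + y) := by
        simp [← hshift]
    _ = Fintype.card G * ∑ y, f y := by
        rw [Finset.sum_comm]
        simp [hsum]

variable (F : Type*) [Field F] [Finite F]

lemma finite_setOf_natDegree_le (n : ℕ) : {p : F[X] | p.natDegree ≤ n}.Finite := by
  have : Finite (degreeLT F (n + 1)) := .of_equiv _ (degreeLTEquiv F (n + 1)).symm.toEquiv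
  refine (Set.toFinite (degreeLT F (n + 1) : Set F[X])).subset fun p hp => ?_
  exact mem_degreeLT.2 (degree_le_natDegree.trans_lt (by exact_mod_cast Nat.lt_succ_of_le hp))

/-- The binary forms of degree `n` over a finite field, encoded as polynomials of degree at most
`n`. -/
def forms (n : ℕ) : Finset F[X] := (finite_setOf_natDegree_le F n).toFinset

variable {F}

lemma mem_forms {n : ℕ} {p : F[X]} : p ∈ forms F n ↔ p.natDegree ≤ n := by
  rw [forms, Set.Finite.mem_toFinset, Set.mem_ofPred_eq]

lemma mem_forms_iff_mem_degreeLT {n : ℕ} {p : F[X]} : p ∈ forms F n ↔ p ∈ degreeLT F (n + 1) := by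
  rw [mem_forms, mem_degreeLT, degree_lt_iff_coeff_zero, natDegree_le_iff_coeff_eq_zero]
  simp only [Nat.succ_le_iff]

lemma card_forms (F : Type*) [Field F] [Fintype F] (n : ℕ) :
    (forms F n).card = Fintype.card F ^ (n + 1) := by
  have e : forms F n ≃ (Fin (n + 1) → F) :=
    (Equiv.subtypeEquivRight fun _ => mem_forms_iff_mem_degreeLT).trans
      (degreeLTEquiv F (n + 1)).toEquiv
  rw [← Fintype.card_coe, Fintype.card_congr e, Fintype.card_fun, Fintype.card_fin]

lemma card_mul_sum_forms {F H : Type*} [Field F] [Fintype F] [AddCommGroup H] [Module F H]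
    [Fintype H] {n : ℕ}
    (φ : F[X] →ₗ[F] H) (hφ : ∀ y, ∃ p : F[X], p.natDegree ≤ n ∧ φ p = y) (f : H → ℚ) :
    (Fintype.card H : ℚ) * ∑ p ∈ forms F n, f (φ p) = Fintype.card F ^ (n + 1) * ∑ y, f y := by
  have : Fintype (degreeLT F (n + 1)) :=
    Fintype.subtype (forms F n) fun _ => mem_forms_iff_mem_degreeLT
  have hcard : Fintype.card F ^ (n + 1) = Fintype.card (degreeLT F (n + 1)) := by
    rw [← card_forms, Fintype.card_of_subtype _ fun _ => mem_forms_iff_mem_degreeLT]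
  rw [Finset.sum_subtype _ fun _ => mem_forms_iff_mem_degreeLT, ← Nat.cast_pow, hcard]
  refine card_mul_sum_comp (φ ∘ₗ (degreeLT F (n + 1)).subtype).toAddMonoidHom (fun y => ?_) f
  obtain ⟨p, hp, rfl⟩ := hφ y
  exact ⟨⟨p, mem_forms_iff_mem_degreeLT.1 (mem_forms.2 hp)⟩, rfl⟩

end Equidistribution

namespace QuadPair

section Rescale

variable {F : Type*} [Field F] {d m : ℕ} {D r : F[X]} {w v : QuadPair F}

lemma IsNormalization.rescale (h : IsNormalization d m D r w v) {a : F} (ha : a ≠ 0) {t : F[X]}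
    (ht : t.natDegree ≤ m) :
    IsNormalization d m (C a * D) (r + D * t) (scale (C a⁻¹) (QuadPair.translate (-t) w)) v where
  natDegree_conductor_le := (natDegree_C_mul_le a D).trans h.natDegree_conductor_le
  natDegree_translation_le := natDegree_add_le_of_degree_le h.natDegree_translation_le
    (natDegree_mul_le_of_le h.natDegree_conductor_le ht)
  hasDegreeLE := (h.hasDegreeLE.translate (by rwa [natDegree_neg])).scale_C a⁻¹
  eq_translate_scale := by
    rw [scale_scale, mul_right_comm, ← C_mul, mul_inv_cancel₀ ha, C_1, one_mul,
      QuadPair.scale_translate, translate_translate, h.eq_translate_scale]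
    congr 1
    ring
  conductor_ne_zero := mul_ne_zero (C_ne_zero.2 ha) h.conductor_ne_zero
  isNormal := (h.isNormal.translate (by rwa [natDegree_neg])).scale_C (inv_ne_zero ha)

lemma IsNormalization.target_unique {w' : QuadPair F} (h : IsNormalization d m D r w v)
    (h' : IsNormalization d m D r w' v) : w = w' :=
  scale_injective h.conductor_ne_zero
    (translate_injective r (h.eq_translate_scale.symm.trans h'.eq_translate_scale))

end Rescale

section Counting

variable (F : Type*) [Field F] [Finite F]

/-- The pairs of forms of degrees `n` and `2 n`. -/
def pairs (n : ℕ) : Finset (QuadPair F) := forms F n ×ˢ forms F (2 * n)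

open Classical in
/-- The pairs of forms of degrees `n` and `2 n` that define a normal curve. -/
def normalPairs (n : ℕ) : Finset (QuadPair F) := (pairs F n).filter (IsNormal n)

open Classical in
/-- The triples `(D, w, r)` that can occur in an `IsNormalization d m D r w v`. -/
def normalizationData (d m : ℕ) : Finset (F[X] × QuadPair F × F[X]) :=
  (forms F d).erase 0 ×ˢ normalPairs F m ×ˢ forms F (d + m)

variable {F}

/-- The curve with normalization given by the triple `(D, w, r)`. -/
def denormalize (x : F[X] × QuadPair F × F[X]) : QuadPair F := translate x.2.2 (scale x.1 x.2.1)

lemma mem_pairs {n : ℕ} {v : QuadPair F} : v ∈ pairs F n ↔ HasDegreeLE n v := by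
  simp only [pairs, Finset.mem_product, mem_forms, HasDegreeLE]

lemma mem_normalPairs {n : ℕ} {v : QuadPair F} : v ∈ normalPairs F n ↔ IsNormal n v := by
  simp only [normalPairs, Finset.mem_filter, mem_pairs, and_iff_right_iff_imp]
  exact fun h => h.1

lemma mem_normalizationData {d m : ℕ} {D r : F[X]} {w : QuadPair F} :
    (D, w, r) ∈ normalizationData F d m ↔
      IsNormalization d m D r w (denormalize (D, w, r)) := by
  simp only [normalizationData, Finset.mem_product, Finset.mem_erase, mem_forms, mem_normalPairs]
  exact ⟨fun ⟨⟨hD0, hD⟩, hw, hr⟩ => ⟨⟨hD, hr, hw.1, rfl⟩, hD0, hw⟩, fun h =>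
    ⟨⟨h.conductor_ne_zero, h.natDegree_conductor_le⟩, h.isNormal, h.natDegree_translation_le⟩⟩

lemma mem_filter_normalizationData [DecidableEq (QuadPair F)] {d m : ℕ} {D r : F[X]}
    {w v : QuadPair F} :
    (D, w, r) ∈ (normalizationData F d m).filter (denormalize · = v) ↔
      IsNormalization d m D r w v := by
  rw [Finset.mem_filter, mem_normalizationData]
  constructor
  · rintro ⟨h, rfl⟩
    exact h
  · intro h
    have hv : denormalize (D, w, r) = v := h.eq_translate_scale.symm
    exact ⟨hv.symm ▸ h, hv⟩

lemma IsNormalization.card_filter_denormalize_eq_zero [DecidableEq (QuadPair F)] {d m d' m' : ℕ}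
    {D r : F[X]} {w v : QuadPair F} (h : IsNormalization d m D r w v)
    (hn : d' + m' = d + m) (hd : d' ≠ d) :
    ((normalizationData F d' m').filter (denormalize · = v)).card = 0 := by
  rw [Finset.card_eq_zero]
  refine Finset.eq_empty_of_forall_notMem ?_
  rintro ⟨D', w', r'⟩ h'
  exact hd (h.unique (mem_filter_normalizationData.1 h') hn).1

lemma sum_normalizationData [DecidableEq (QuadPair F)] (d m : ℕ) (f : QuadPair F → ℚ) :
    ∑ x ∈ normalizationData F d m, f (denormalize x) =
      ∑ v ∈ pairs F (d + m),
        ((normalizationData F d m).filter (denormalize · = v)).card * f v := by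
  have hmaps : ∀ x ∈ normalizationData F d m, denormalize x ∈ pairs F (d + m) :=
    fun _ hx => mem_pairs.2 (mem_normalizationData.1 hx).hasDegreeLE_target
  simp only [← Finset.sum_fiberwise_of_maps_to' hmaps, Finset.sum_const, nsmul_eq_mul]

end Counting

section Fibers

variable {F : Type*} [Field F] [Fintype F]

namespace IsNormalization

variable {d m : ℕ} {D r : F[X]} {w v : QuadPair F}

lemma card_filter_denormalize_eq [DecidableEq (QuadPair F)] (h : IsNormalization d m D r w v) :
    ((normalizationData F d m).filter (denormalize · = v)).card =
      (Fintype.card F - 1) * Fintype.card F ^ (m + 1) := by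
  classical
  have hunits : (Finset.univ.erase (0 : F)).card = Fintype.card F - 1 :=
    Finset.card_erase_of_mem (Finset.mem_univ 0)
  rw [← hunits, ← card_forms, ← Finset.card_product]
  symm
  refine Finset.card_nbij
    (fun x => (C x.1 * D, scale (C x.1⁻¹) (QuadPair.translate (-x.2) w), r + D * x.2)) ?_ ?_ ?_
  · rintro ⟨a, t⟩ hat
    simp only [Finset.coe_product, Set.mem_prod, SetLike.mem_coe, Finset.mem_erase, Finset.mem_univ,
      and_true, mem_forms] at hat
    exact mem_filter_normalizationData.2 (h.rescale hat.1 hat.2)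
  · rintro ⟨a, t⟩ - ⟨b, s⟩ - hab
    obtain ⟨hD, -, hr⟩ : C a * D = C b * D ∧ _ ∧ r + D * t = r + D * s := by
      simpa only [Prod.mk.injEq] using hab
    rw [C_injective (mul_right_cancel₀ h.conductor_ne_zero hD),
      mul_left_cancel₀ h.conductor_ne_zero (add_left_cancel hr)]
  · rintro ⟨D', w', r'⟩ h'
    have h' : IsNormalization d m D' r' w' v := mem_filter_normalizationData.1 h'
    obtain ⟨-, a, ha, rfl, t, ht, rfl⟩ := h.unique h' rfl
    exact ⟨(a, t), by simp [ha, mem_forms, ht], by simp only [(h.rescale ha ht).target_unique h']⟩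

lemma sum_card_filter_denormalize [DecidableEq (QuadPair F)] (h : IsNormalization d m D r w v) :
    ∑ x ∈ Finset.HasAntidiagonal.antidiagonal (d + m),
      (((Fintype.card F : ℚ) - 1) * Fintype.card F ^ (x.2 + 1))⁻¹ *
        ((normalizationData F x.1 x.2).filter (denormalize · = v)).card = 1 := by
  have hq := natCast_card_sub_one_ne_zero F
  rw [Finset.sum_eq_single_of_mem (d, m) (Finset.HasAntidiagonal.mem_antidiagonal.2 rfl)]
  · rw [h.card_filter_denormalize_eq]
    push_cast [Fintype.one_lt_card.le]
    exact inv_mul_cancel₀ (mul_ne_zero hq (by positivity))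
  · rintro ⟨d', m'⟩ hx hne
    rw [Finset.HasAntidiagonal.mem_antidiagonal] at hx
    rw [h.card_filter_denormalize_eq_zero hx fun hd => hne (Prod.ext hd (by simp only; omega)),
      Nat.cast_zero, mul_zero]

end IsNormalization

open Classical in
lemma sum_normalizationData_of_translate_invariant {n : ℕ} {f : QuadPair F → ℚ}
    (hf : ∀ ⦃v r⦄, HasDegreeLE n v → r.natDegree ≤ n → f (translate r v) = f v) {d m : ℕ}
    (hn : d + m = n) :
    ∑ x ∈ normalizationData F d m, f (denormalize x) =
      Fintype.card F ^ (n + 1) *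
        ∑ D ∈ (forms F d).erase 0, ∑ w ∈ normalPairs F m, f (scale D w) := by
  classical
  subst hn
  have hfr : ∀ D ∈ (forms F d).erase 0, ∀ w ∈ normalPairs F m, ∀ r ∈ forms F (d + m),
      f (denormalize (D, w, r)) = f (scale D w) := fun D hD w hw r hr =>
    hf ((mem_normalPairs.1 hw).1.scale (mem_forms.1 (Finset.mem_of_mem_erase hD)))
      (mem_forms.1 hr)
  simp only [normalizationData, Finset.sum_product, Finset.mul_sum]
  refine Finset.sum_congr (by congr) fun D hD => Finset.sum_congr rfl fun w hw => ?_
  rw [Finset.sum_congr rfl (hfr D hD w hw), Finset.sum_const, card_forms, nsmul_eq_mul,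
    Nat.cast_pow]

open Classical in
theorem sum_pairs_eq_sum_antidiagonal {n : ℕ} {f : QuadPair F → ℚ} (hf0 : f 0 = 0)
    (hf : ∀ ⦃v r⦄, HasDegreeLE n v → r.natDegree ≤ n → f (translate r v) = f v) :
    ∑ v ∈ pairs F n, f v = ∑ x ∈ Finset.HasAntidiagonal.antidiagonal n,
      (Fintype.card F : ℚ) ^ x.1 / (Fintype.card F - 1) *
        ∑ D ∈ (forms F x.1).erase 0, ∑ w ∈ normalPairs F x.2, f (scale D w) := by
  classical
  set q := (Fintype.card F : ℚ)
  have hq : q ≠ 0 := by simp [q]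
  let c (m : ℕ) : ℚ := ((q - 1) * q ^ (m + 1))⁻¹
  calc ∑ v ∈ pairs F n, f v
      = ∑ v ∈ pairs F n, ∑ x ∈ Finset.HasAntidiagonal.antidiagonal n, c x.2 *
          ((normalizationData F x.1 x.2).filter (denormalize · = v)).card * f v := by
        refine Finset.sum_congr rfl fun v hv => ?_
        rw [← Finset.sum_mul]
        rcases exists_isNormalization (mem_pairs.1 hv) with
          ⟨r, hr, rfl⟩ | ⟨d, m, D, r, w, rfl, h⟩
        · rw [hf (hasDegreeLE_zero n) hr, hf0, mul_zero]
        · rw [h.sum_card_filter_denormalize, one_mul]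
    _ = ∑ x ∈ Finset.HasAntidiagonal.antidiagonal n, c x.2 *
          ∑ y ∈ normalizationData F x.1 x.2, f (denormalize y) := by
        rw [Finset.sum_comm]
        refine Finset.sum_congr rfl fun x hx => ?_
        rw [sum_normalizationData, Finset.HasAntidiagonal.mem_antidiagonal.1 hx, Finset.mul_sum]
        simp only [mul_assoc]
    _ = _ := by
        refine Finset.sum_congr rfl fun x hx => ?_
        have hn := Finset.HasAntidiagonal.mem_antidiagonal.1 hx
        rw [sum_normalizationData_of_translate_invariant hf hn, ← hn, ← mul_assoc]
        congr 1
        change ((q - 1) * q ^ (x.2 + 1))⁻¹ * q ^ (x.1 + x.2 + 1) = q ^ x.1 / (q - 1)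
        rw [add_assoc, pow_add q x.1]
        field_simp

end Fibers

end QuadPair

/-! ### Solutions of quadratic equations over a finite field -/

section QuadraticExcess

lemma sum_natCard_subtype_comm {α β : Type*} [Fintype α] [Fintype β] (r : α → β → Prop) :
    ∑ x, Nat.card {y // r x y} = ∑ y, Nat.card {x // r x y} := by
  classical
  simp only [Nat.card_eq_fintype_card, Fintype.card_subtype]
  exact Finset.sum_card_bipartiteAbove_eq_sum_card_bipartiteBelow r

/-- The number of solutions of `y ^ 2 + a * y = b`, minus one: the contribution to the number of
points of a double cover of a point of the base with residual equation `y ^ 2 + a * y = b`. -/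
def quadraticExcess {L : Type*} [Field L] (a b : L) : ℚ :=
  Nat.card {y : L // y ^ 2 + a * y = b} - 1

section

variable {L : Type*} [Field L]

lemma quadraticExcess_translate (a b s : L) :
    quadraticExcess (a + 2 * s) (b - s ^ 2 - a * s) = quadraticExcess a b := by
  rw [quadraticExcess, quadraticExcess,
    Nat.card_congr ((Equiv.addRight s).subtypeEquiv fun y => ?_)]
  rw [Equiv.coe_addRight, ← sub_eq_zero, ← sub_eq_zero (b := b)]
  ring_nf

lemma quadraticExcess_scale (a b : L) {c : L} (hc : c ≠ 0) :
    quadraticExcess (c * a) (c ^ 2 * b) = quadraticExcess a b := by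
  rw [quadraticExcess, quadraticExcess,
    ← Nat.card_congr ((Equiv.mulLeft₀ c hc).subtypeEquiv fun y => ?_)]
  rw [← mul_right_inj' (pow_ne_zero 2 hc), Equiv.mulLeft₀_apply]
  ring_nf

lemma quadraticExcess_zero : quadraticExcess (0 : L) 0 = 0 := by
  simp [quadraticExcess]

lemma sum_quadraticExcess [Fintype L] (a : L) : ∑ b, quadraticExcess a b = 0 := by
  have hcard : ∑ b, Nat.card {y : L // y ^ 2 + a * y = b} = Fintype.card L := by
    rw [sum_natCard_subtype_comm]
    simp
  simp only [quadraticExcess, Finset.sum_sub_distrib, ← Nat.cast_sum, hcard]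
  simp

end

variable {F L : Type*} [Field F] [Field L] [Algebra F L]

lemma bijective_add_mul_of_finrank_eq_two (hL : Module.finrank F L = 2) {x : L}
    (hx : x ∉ Set.range (algebraMap F L)) :
    Function.Bijective fun z : F × F => algebraMap F L z.1 + algebraMap F L z.2 * x := by
  let φ : F × F →ₗ[F] L :=
    (Algebra.linearMap F L).coprod (LinearMap.mulRight F x ∘ₗ Algebra.linearMap F L)
  have : FiniteDimensional F L := .of_finrank_pos (by omega)
  have hφ : Function.Injective φ := by
    rw [← LinearMap.ker_eq_bot, LinearMap.ker_eq_bot']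
    rintro ⟨s, t⟩ hst
    have hst : algebraMap F L s + algebraMap F L t * x = 0 := hst
    have ht : t = 0 := by
      by_contra ht
      refine hx ⟨-s / t, ?_⟩
      rw [map_div₀, map_neg, div_eq_iff (by simpa using ht)]
      linear_combination -hst
    simpa [ht] using hst
  exact ⟨hφ, (LinearMap.injective_iff_surjective_of_finrank_eq_finrank (by simp [hL])).1 hφ⟩

variable [Fintype F]

open Classical in
lemma sum_ite_mem_range_algebraMap [Fintype L] (a b : ℚ) :
    ∑ x : L, (if x ∈ Set.range (algebraMap F L) then a else b) =
      Fintype.card F * a + (Fintype.card L - Fintype.card F) * b := by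
  have hcard : (Finset.univ.filter (· ∈ Set.range (algebraMap F L))).card = Fintype.card F := by
    rw [← Finset.card_univ, ← Finset.card_image_of_injective _ (algebraMap F L).injective]
    congr 1
    ext
    simp
  have hcompl := Finset.card_filter_add_card_filter_not (s := (Finset.univ : Finset L))
    (· ∈ Set.range (algebraMap F L))
  rw [hcard, Finset.card_univ] at hcompl
  rw [Finset.sum_ite, Finset.sum_const, Finset.sum_const, hcard, ← hcompl]
  simp

open Classical in
lemma natCard_setOf_sq_add_mul_eq (hL : Module.finrank F L = 2) (y : L) :
    Nat.card {z : F × F // y ^ 2 + algebraMap F L z.1 * y = algebraMap F L z.2} =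
      if y ∈ Set.range (algebraMap F L) then Fintype.card F else 1 := by
  split_ifs with hy
  · obtain ⟨x, rfl⟩ := hy
    let e : F ≃ {z : F × F //
        algebraMap F L x ^ 2 + algebraMap F L z.1 * algebraMap F L x = algebraMap F L z.2} :=
      { toFun := fun a => ⟨(a, x ^ 2 + a * x), by simp⟩
        invFun := fun z => z.1.1
        left_inv := fun a => rfl
        right_inv := fun ⟨(a, b), h⟩ => by
          have h : x ^ 2 + a * x = b := (algebraMap F L).injective (by simpa using h)
          simp [h] }
    rw [← Nat.card_congr e, Nat.card_eq_fintype_card]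
  · obtain ⟨hinj, hsurj⟩ := bijective_add_mul_of_finrank_eq_two hL hy
    obtain ⟨⟨b, a⟩, hab⟩ := hsurj (y ^ 2)
    have hab : algebraMap F L b + algebraMap F L a * y = y ^ 2 := hab
    refine Nat.card_eq_one_iff_exists.2 ⟨⟨(-a, b), by rw [← hab, map_neg]; ring⟩, ?_⟩
    rintro ⟨⟨a', b'⟩, h⟩
    have h' : (b', -a') = (b, a) :=
      hinj (show algebraMap F L b' + algebraMap F L (-a') * y =
        algebraMap F L b + algebraMap F L a * y by rw [map_neg]; linear_combination -h - hab)
    obtain ⟨rfl, rfl⟩ := Prod.mk.inj h'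
    simp

lemma sum_quadraticExcess_algebraMap (hL : Module.finrank F L = 2) :
    ∑ a : F, ∑ b : F, quadraticExcess (algebraMap F L a) (algebraMap F L b) =
      (Fintype.card F : ℚ) ^ 2 - Fintype.card F := by
  have : FiniteDimensional F L := .of_finrank_pos (by omega)
  have : Finite L := Module.finite_of_finite F
  have : Fintype L := Fintype.ofFinite L
  have hcard : Fintype.card L = Fintype.card F ^ 2 := by 
    rw [← hL, Module.card_eq_pow_finrank (K := F)]
  have hcount : (∑ z : F × F,
      Nat.card {y : L // y ^ 2 + algebraMap F L z.1 * y = algebraMap F L z.2} : ℚ) =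
        Fintype.card F * Fintype.card F + (Fintype.card L - Fintype.card F) * 1 := by
    classical
    rw [← sum_ite_mem_range_algebraMap, ← Nat.cast_sum,
      sum_natCard_subtype_comm fun (z : F × F) (y : L) =>
        y ^ 2 + algebraMap F L z.1 * y = algebraMap F L z.2]
    simp only [natCard_setOf_sq_add_mul_eq hL, Nat.cast_sum, Nat.cast_ite, Nat.cast_one]
  rw [← Fintype.sum_prod_type']
  simp only [quadraticExcess, Finset.sum_sub_distrib, hcount, hcard]
  simp

end QuadraticExcess

/-! ### The excess of a curve at a point -/

section Evaluation

variable {F L : Type*} [Field F] [Field L] [Algebra F L]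

lemma exists_formEval_eq (n : ℕ) {u v : F} (h : u ≠ 0 ∨ v ≠ 0) (c : F) :
    ∃ p : F[X], p.natDegree ≤ n ∧ formEval n u v p = c := by
  rcases h with hu | hv
  · refine ⟨monomial n (c / u ^ n), natDegree_monomial_le _, ?_⟩
    rw [formEval_apply, Finset.sum_eq_single_of_mem n (Finset.self_mem_range_succ n)]
    · simp [hu]
    · intro i _ hi
      simp [coeff_monomial, hi.symm]
  · refine ⟨C (c / v ^ n), (natDegree_C _).trans_le (Nat.zero_le n), ?_⟩
    rw [formEval_apply, Finset.sum_eq_single_of_mem 0 (Finset.mem_range.2 n.succ_pos)]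
    · simp [hv]
    · intro i _ hi
      simp [coeff_C, hi]

lemma exists_formEval_eq_of_notMem_range (hL : Module.finrank F L = 2) {x : L}
    (hx : x ∉ Set.range (algebraMap F L)) {n : ℕ} (hn : 1 ≤ n) (c : L) :
    ∃ p : F[X], p.natDegree ≤ n ∧ formEval n x 1 p = c := by
  obtain ⟨⟨s, t⟩, hst⟩ := (bijective_add_mul_of_finrank_eq_two hL hx).2 c
  have hdeg : (C t * X + C s).natDegree ≤ n := natDegree_linear_le.trans hn
  refine ⟨C t * X + C s, hdeg, ?_⟩
  rw [formEval_one_right x hdeg, ← hst]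
  simp [add_comm]

lemma card_mul_card_filter_forms {F H : Type*} [Field F] [Fintype F] [AddCommGroup H] [Module F H]
    [Fintype H] [DecidableEq H] {n : ℕ} (φ : F[X] →ₗ[F] H)
    (hφ : ∀ y, ∃ p : F[X], p.natDegree ≤ n ∧ φ p = y) :
    (Fintype.card H : ℚ) * ((forms F n).filter (φ · ≠ 0)).card =
      Fintype.card F ^ (n + 1) * (Fintype.card H - 1) := by
  have h := card_mul_sum_forms φ hφ fun y => if y ≠ 0 then 1 else 0
  rw [Finset.sum_boole, Finset.sum_boole, Finset.filter_ne',
    Finset.card_erase_of_mem (Finset.mem_univ _), Finset.card_univ,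
    Nat.cast_sub Fintype.card_pos, Nat.cast_one] at h
  exact h

end Evaluation

lemma sub_mul_eq_of_geometric_convolution {R : Type*} [CommRing R] {a S T : ℕ → R} {b c : R}
    (ha0 : a 0 = 1) (ha : ∀ k, a (k + 1) = b * c ^ k)
    (hT : ∀ n, T n = ∑ x ∈ Finset.HasAntidiagonal.antidiagonal n, a x.1 * S x.2) (n : ℕ) :
    T (n + 1) - c * T n = S (n + 1) + (b - c) * S n := by
  have hsum : ∑ x ∈ Finset.HasAntidiagonal.antidiagonal n, (a (x.1 + 1) - c * a x.1) * S x.2 =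
      (b - c) * S n := by
    rw [Finset.sum_eq_single_of_mem (0, n) (by simp)]
    · simp [ha, ha0]
    · rintro ⟨i, j⟩ hij hne
      obtain _ | i := i
      · simp_all
      · rw [ha, ha]
        ring
  rw [hT, hT, Finset.Nat.sum_antidiagonal_succ, ha0, ← hsum, Finset.mul_sum, one_mul, add_sub_assoc,
    ← Finset.sum_sub_distrib]
  simp only [sub_mul, mul_assoc]

namespace QuadPair

section Excess

variable {F L : Type*} [Field F] [Field L] [Algebra F L]

/-- The number of `L`-points of the curve `y ^ 2 + Q y = P` above the point `(u : v)` of the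
projective line, minus one. -/
def excess (n : ℕ) (u v : L) (w : QuadPair F) : ℚ :=
  quadraticExcess (formEval n u v w.1) (formEval (2 * n) u v w.2)

lemma excess_zero (n : ℕ) (u v : L) : excess n u v (0 : QuadPair F) = 0 := by
  simp [excess, quadraticExcess_zero]

lemma excess_zero_degree (u v u' v' : L) (w : QuadPair F) : excess 0 u v w = excess 0 u' v' w := by
  simp only [excess, mul_zero, formEval_zero_degree]

lemma excess_translate {n : ℕ} (u v : L) {w : QuadPair F} (hw : HasDegreeLE n w) {r : F[X]}
    (hr : r.natDegree ≤ n) : excess n u v (translate r w) = excess n u v w := by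
  simp only [excess, translate, map_add, map_sub, formEval_two_mul, two_mul n,
    formEval_mul u v hw.1 hr]
  rw [← two_mul n, formEval_pow u v hr, quadraticExcess_translate]

lemma excess_scale {d m : ℕ} (u v : L) {w : QuadPair F} (hw : HasDegreeLE m w) {D : F[X]}
    (hD : D.natDegree ≤ d) [Decidable (formEval d u v D ≠ 0)] :
    excess (d + m) u v (scale D w) = if formEval d u v D ≠ 0 then excess m u v w else 0 := by
  rw [excess, scale, formEval_mul u v hD hw.1, mul_add,
    formEval_mul u v (natDegree_pow_le_of_le 2 hD) hw.2, formEval_pow u v hD]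
  split_ifs with h
  · exact quadraticExcess_scale _ _ h
  · rw [not_not.1 h, zero_pow two_ne_zero, zero_mul, zero_mul, quadraticExcess_zero]

lemma excess_smul_point (n : ℕ) {c : L} (hc : c ≠ 0) (u v : L) (w : QuadPair F) :
    excess n (c * u) (c * v) w = excess n u v w := by
  rw [excess, formEval_smul_point, formEval_smul_point, mul_comm 2 n, pow_mul,
    quadraticExcess_scale _ _ (pow_ne_zero n hc), mul_comm n, excess]

variable (F) [Finite F]

/-- The sum of the excesses at `(u : v)` of all pairs of forms of degrees `n` and `2 n`. -/
def totalExcess (n : ℕ) (u v : L) : ℚ := ∑ w ∈ pairs F n, excess n u v w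

/-- The sum of the excesses at `(u : v)` of the normal pairs of forms of degrees `n` and `2 n`. -/
def normalExcess (n : ℕ) (u v : L) : ℚ := ∑ w ∈ normalPairs F n, excess n u v w

open Classical in
/-- The forms of degree `d` that do not vanish at `(u : v)`. -/
def nonvanishingForms (d : ℕ) (u v : L) : Finset F[X] := (forms F d).filter (formEval d u v · ≠ 0)

lemma totalExcess_zero_degree (u v u' v' : L) : totalExcess F 0 u v = totalExcess F 0 u' v' := by
  simp only [totalExcess, excess_zero_degree u v u' v']

lemma nonvanishingForms_zero_degree (u v u' v' : L) :
    nonvanishingForms F 0 u v = nonvanishingForms F 0 u' v' := by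
  classical
  exact Finset.filter_congr fun p _ => by rw [formEval_zero_degree, formEval_zero_degree]

variable {F}

lemma totalExcess_of_notMem_range (hL : Module.finrank F L = 2) {x : L}
    (hx : x ∉ Set.range (algebraMap F L)) (n : ℕ) : totalExcess F (n + 1) x 1 = 0 := by
  have : FiniteDimensional F L := .of_finrank_pos (by omega)
  have : Finite L := Module.finite_of_finite F
  have := Fintype.ofFinite F
  have : Fintype L := Fintype.ofFinite L
  have hcard : (Fintype.card L : ℚ) ≠ 0 := by simp
  rw [totalExcess, pairs, Finset.sum_product]
  refine Finset.sum_eq_zero fun Q _ => ?_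
  have hsum := card_mul_sum_forms (formEval (2 * (n + 1)) x 1)
    (exists_formEval_eq_of_notMem_range hL hx (by omega)) (quadraticExcess (formEval (n + 1) x 1 Q))
  rw [sum_quadraticExcess, mul_zero] at hsum
  exact (mul_eq_zero.1 hsum).resolve_left hcard

end Excess

section Generating

variable {F L : Type*} [Field F] [Fintype F] [Field L] [Algebra F L]

variable (F) in
/-- The weight with which the normal curves contribute to `totalExcess` through the conductors of
degree `d`; dividing by `q - 1` makes it count the conductors up to scalars. -/
def conductorWeight (d : ℕ) (u v : L) : ℚ :=
  Fintype.card F ^ d * ((nonvanishingForms F d u v).card / (Fintype.card F - 1))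

theorem totalExcess_eq_sum_antidiagonal (n : ℕ) (u v : L) :
    totalExcess F n u v = ∑ x ∈ Finset.HasAntidiagonal.antidiagonal n,
      conductorWeight F x.1 u v * normalExcess F x.2 u v := by
  classical
  rw [totalExcess, sum_pairs_eq_sum_antidiagonal (excess_zero n u v)
    fun _ _ hw hr => excess_translate u v hw hr]
  refine Finset.sum_congr rfl fun ⟨d, m⟩ hx => ?_
  obtain rfl : d + m = n := Finset.HasAntidiagonal.mem_antidiagonal.1 hx
  have hscale : ∀ D ∈ forms F d, ∑ w ∈ normalPairs F m, excess (d + m) u v (scale D w) =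
      if formEval d u v D ≠ 0 then normalExcess F m u v else 0 := by
    intro D hD
    rw [Finset.sum_congr rfl fun w hw =>
      excess_scale u v (mem_normalPairs.1 hw).1 (mem_forms.1 hD)]
    split_ifs
    · rfl
    · rw [Finset.sum_const_zero]
  have hzero : ∑ w ∈ normalPairs F m, excess (d + m) u v (scale 0 w) = 0 := by
    rw [hscale 0 (mem_forms.2 (natDegree_zero.trans_le (Nat.zero_le d))), map_zero]
    exact if_neg (not_not.2 rfl)
  rw [Finset.sum_erase (f := fun D => ∑ w ∈ normalPairs F m, excess (d + m) u v (scale D w)) _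
    hzero, Finset.sum_congr rfl hscale, ← Finset.sum_filter, Finset.sum_const, nsmul_eq_mul,
    conductorWeight, nonvanishingForms]
  ring

section Rational

variable {u v : F}

lemma totalExcess_algebraMap (hL : Module.finrank F L = 2) (n : ℕ) (h : u ≠ 0 ∨ v ≠ 0) :
    totalExcess F n (algebraMap F L u) (algebraMap F L v) =
      (Fintype.card F : ℚ) ^ (3 * n) * ((Fintype.card F : ℚ) ^ 2 - Fintype.card F) := by
  have hq : (Fintype.card F : ℚ) ≠ 0 := by simp
  have hsum (m : ℕ) (f : F → ℚ) :
      ∑ p ∈ forms F m, f (formEval m u v p) = (Fintype.card F : ℚ) ^ m * ∑ c, f c := by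
    apply mul_left_cancel₀ hq
    rw [card_mul_sum_forms _ (exists_formEval_eq m h), pow_succ']
    ring
  rw [totalExcess, pairs, Finset.sum_product, ← sum_quadraticExcess_algebraMap hL]
  simp only [excess, formEval_algebraMap]
  rw [Finset.sum_congr rfl fun Q _ => hsum (2 * n) fun c =>
      quadraticExcess (algebraMap F L (formEval n u v Q)) (algebraMap F L c),
    ← Finset.mul_sum,
    hsum n fun a => ∑ c : F, quadraticExcess (algebraMap F L a) (algebraMap F L c)]
  ring

lemma card_nonvanishingForms_algebraMap (L : Type*) [Field L] [Algebra F L] (d : ℕ)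
    (h : u ≠ 0 ∨ v ≠ 0) :
    ((nonvanishingForms F d (algebraMap F L u) (algebraMap F L v)).card : ℚ) =
      (Fintype.card F : ℚ) ^ d * (Fintype.card F - 1) := by
  classical
  have hq : (Fintype.card F : ℚ) ≠ 0 := by simp
  have hforms : nonvanishingForms F d (algebraMap F L u) (algebraMap F L v) =
      (forms F d).filter (formEval d u v · ≠ 0) :=
    Finset.filter_congr fun p _ => by rw [formEval_algebraMap, ne_eq, ne_eq, map_eq_zero]
  apply mul_left_cancel₀ hq
  rw [hforms]
  have hcount := card_mul_card_filter_forms _ (exists_formEval_eq d h)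
  rwa [pow_succ', mul_assoc] at hcount

lemma conductorWeight_algebraMap (L : Type*) [Field L] [Algebra F L] (d : ℕ)
    (h : u ≠ 0 ∨ v ≠ 0) :
    conductorWeight F d (algebraMap F L u) (algebraMap F L v) = ((Fintype.card F : ℚ) ^ 2) ^ d := by
  rw [conductorWeight, card_nonvanishingForms_algebraMap L d h,
    mul_div_cancel_right₀ _ (natCast_card_sub_one_ne_zero F)]
  ring

lemma normalExcess_algebraMap (hL : Module.finrank F L = 2) (n : ℕ) (h : u ≠ 0 ∨ v ≠ 0) :
    normalExcess F (n + 1) (algebraMap F L u) (algebraMap F L v) =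
      (Fintype.card F : ℚ) ^ (3 * (n + 1)) * ((Fintype.card F : ℚ) - 1) ^ 2 := by
  have hweight (k : ℕ) := conductorWeight_algebraMap L k h
  have hrec := sub_mul_eq_of_geometric_convolution
    (a := fun d => conductorWeight F d (algebraMap F L u) (algebraMap F L v))
    (S := fun m => normalExcess F m (algebraMap F L u) (algebraMap F L v))
    (T := fun m => totalExcess F m (algebraMap F L u) (algebraMap F L v))
    (by rw [hweight, pow_zero]) (fun k => by rw [hweight, pow_succ'])
    (totalExcess_eq_sum_antidiagonal · (algebraMap F L u) (algebraMap F L v)) n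
  rw [totalExcess_algebraMap hL _ h, totalExcess_algebraMap hL _ h] at hrec
  linear_combination -hrec

end Rational

section Quadratic

variable {x : L}

lemma card_nonvanishingForms_of_notMem_range (hL : Module.finrank F L = 2)
    (hx : x ∉ Set.range (algebraMap F L)) (d : ℕ) :
    ((nonvanishingForms F (d + 1) x 1).card : ℚ) =
      (Fintype.card F : ℚ) ^ d * ((Fintype.card F : ℚ) ^ 2 - 1) := by
  classical
  have : FiniteDimensional F L := .of_finrank_pos (by omega)
  have : Finite L := Module.finite_of_finite F
  have : Fintype L := Fintype.ofFinite L
  have hq : (Fintype.card F : ℚ) ≠ 0 := by simp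
  have hcard : (Fintype.card L : ℚ) = Fintype.card F ^ 2 := by
    rw [← hL, Module.card_eq_pow_finrank (K := F), Nat.cast_pow]
  have hcount := card_mul_card_filter_forms (formEval (d + 1) x 1)
    (exists_formEval_eq_of_notMem_range hL hx (by omega))
  rw [hcard] at hcount
  apply mul_left_cancel₀ (pow_ne_zero 2 hq)
  rw [nonvanishingForms]
  convert hcount using 1
  ring

lemma conductorWeight_of_notMem_range (hL : Module.finrank F L = 2)
    (hx : x ∉ Set.range (algebraMap F L)) (d : ℕ) :
    conductorWeight F (d + 1) x 1 =
      (Fintype.card F : ℚ) * (Fintype.card F + 1) * ((Fintype.card F : ℚ) ^ 2) ^ d := by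
  have hq := natCast_card_sub_one_ne_zero F
  rw [conductorWeight, card_nonvanishingForms_of_notMem_range hL hx]
  field_simp
  ring

lemma normalExcess_of_notMem_range (hL : Module.finrank F L = 2)
    (hx : x ∉ Set.range (algebraMap F L)) (n : ℕ) :
    normalExcess F (n + 1) x 1 =
      (-1) ^ (n + 1) * (Fintype.card F : ℚ) ^ (n + 2) * ((Fintype.card F : ℚ) ^ 2 - 1) := by
  have htotal : totalExcess F 0 x 1 = (Fintype.card F : ℚ) ^ 2 - Fintype.card F := by
    rw [totalExcess_zero_degree F x 1 (algebraMap F L 1) (algebraMap F L 0),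
      totalExcess_algebraMap hL 0 (Or.inl one_ne_zero), mul_zero, pow_zero, one_mul]
  have hweight : conductorWeight F 0 x 1 = 1 := by
    rw [conductorWeight, nonvanishingForms_zero_degree F x 1 (algebraMap F L 1) (algebraMap F L 0),
      ← conductorWeight, conductorWeight_algebraMap L 0 (Or.inl one_ne_zero), pow_zero]
  have hrec := sub_mul_eq_of_geometric_convolution (a := fun d => conductorWeight F d x 1)
    (S := fun m => normalExcess F m x 1) (T := fun m => totalExcess F m x 1) hweight
    (conductorWeight_of_notMem_range hL hx) (totalExcess_eq_sum_antidiagonal · x 1)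
  induction n with
  | zero =>
    have hnormal := totalExcess_eq_sum_antidiagonal (F := F) 0 x 1
    rw [Finset.Nat.antidiagonal_zero, Finset.sum_singleton, hweight, htotal, one_mul] at hnormal
    have h := hrec 0
    rw [totalExcess_of_notMem_range hL hx, htotal, ← hnormal] at h
    linear_combination -h
  | succ n ih =>
    have h := hrec (n + 1)
    rw [totalExcess_of_notMem_range hL hx, totalExcess_of_notMem_range hL hx, ih] at h
    linear_combination -h

end Quadratic

end Generating

end QuadPair

/-! ### The excess of a curve -/

namespace QuadPair

section ProjectiveExcess

variable {F L : Type*} [Field F] [Field L] [Fintype L] [Algebra F L]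

variable (L) in
/-- The number of `L`-points of the curve `y ^ 2 + Q y = P`, minus the number `#L + 1` of points of
the projective line. -/
def projectiveExcess (n : ℕ) (w : QuadPair F) : ℚ := ∑ x : L, excess n x 1 w + excess n (1 : L) 0 w

lemma natCast_nPoints {g : ℕ} {w : QuadPair F} (hw : HasDegreeLE (g + 1) w) :
    (nPoints g L w.1 w.2 : ℚ) = Fintype.card L + 1 + projectiveExcess L (g + 1) w := by
  have haffine : Nat.card {xy : L × L // xy.2 ^ 2 + aeval xy.1 w.1 * xy.2 = aeval xy.1 w.2} =
      ∑ x : L, Nat.card {y : L // y ^ 2 + aeval x w.1 * y = aeval x w.2} := by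
    rw [← Nat.card_sigma]
    exact Nat.card_congr (Equiv.subtypeProdEquivSigmaSubtype
      fun x y : L => y ^ 2 + aeval x w.1 * y = aeval x w.2)
  simp only [nPoints, haffine, projectiveExcess, excess, quadraticExcess, formEval_one_zero,
    formEval_one_right _ hw.1, formEval_one_right _ hw.2, Finset.sum_sub_distrib, Finset.sum_const,
    Finset.card_univ, nsmul_eq_mul, mul_one]
  push_cast
  rw [show 2 * (g + 1) = 2 * g + 2 by ring]
  ring

lemma projectiveExcess_translate {n : ℕ} {w : QuadPair F} (hw : HasDegreeLE n w) {r : F[X]}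
    (hr : r.natDegree ≤ n) : projectiveExcess L n (translate r w) = projectiveExcess L n w := by
  simp only [projectiveExcess, excess_translate _ _ hw hr]

lemma projectiveExcess_scale_C {n : ℕ} {w : QuadPair F} (hw : HasDegreeLE n w) {c : F}
    (hc : c ≠ 0) : projectiveExcess L n (scale (C c) w) = projectiveExcess L n w := by
  classical
  have hscale (u v : L) : excess n u v (scale (C c) w) = excess n u v w := by
    have h := excess_scale u v hw (natDegree_C c).le
    rwa [zero_add, if_pos] at h
    simpa [formEval_zero_degree] using hc
  simp only [projectiveExcess, hscale]

lemma sum_excess (n : ℕ) (w : QuadPair F) :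
    ∑ p : L × L, excess n p.1 p.2 w =
      ((Fintype.card L : ℚ) - 1) * projectiveExcess L n w + excess n (0 : L) 0 w := by
  classical
  have haffine : ∀ v ∈ Finset.univ.erase (0 : L),
      ∑ u : L, excess n u v w = ∑ x : L, excess n x 1 w := by
    intro v hv
    have hv := Finset.ne_of_mem_erase hv
    refine (Fintype.sum_equiv (Equiv.mulLeft₀ v hv) _ _ fun x => ?_).symm
    rw [← excess_smul_point n hv x 1 w, mul_one, Equiv.mulLeft₀_apply]
  have hinfinity : ∀ u ∈ Finset.univ.erase (0 : L), excess n u 0 w = excess n (1 : L) 0 w := by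
    intro u hu
    rw [← excess_smul_point n (Finset.ne_of_mem_erase hu) 1 0 w, mul_one, mul_zero]
  have hcard : ((Finset.univ.erase (0 : L)).card : ℚ) = Fintype.card L - 1 := by
    rw [Finset.card_erase_of_mem (Finset.mem_univ _), Finset.card_univ,
      Nat.cast_sub Fintype.card_pos, Nat.cast_one]
  have hline : ∑ u : L, excess n u 0 w =
      ((Fintype.card L : ℚ) - 1) * excess n (1 : L) 0 w + excess n (0 : L) 0 w := by
    rw [← Finset.sum_erase_add _ _ (Finset.mem_univ (0 : L)), Finset.sum_congr rfl hinfinity,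
      Finset.sum_const, nsmul_eq_mul, hcard]
  rw [Fintype.sum_prod_type_right, ← Finset.sum_erase_add _ _ (Finset.mem_univ (0 : L)), hline,
    Finset.sum_congr rfl haffine, Finset.sum_const, nsmul_eq_mul, hcard, projectiveExcess]
  ring

lemma sum_excess_subst (n : ℕ) (A : GL (Fin 2) F) (w : QuadPair F) :
    ∑ p : L × L, excess n p.1 p.2 (subst n (A : Matrix (Fin 2) (Fin 2) F) w) =
      ∑ p : L × L, excess n p.1 p.2 w := by
  set M : Matrix (Fin 2) (Fin 2) L := (A : Matrix (Fin 2) (Fin 2) F).map (algebraMap F L)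
  have hM : IsUnit M := (Matrix.GeneralLinearGroup.map (algebraMap F L) A).isUnit
  have hbij : Function.Bijective M.mulVec :=
    Finite.injective_iff_bijective.1 (Matrix.mulVec_injective_of_isUnit hM)
  have hpair (f : L × L → ℚ) : ∑ p, f p = ∑ p : Fin 2 → L, f (p 0, p 1) :=
    (Fintype.sum_equiv (finTwoArrowEquiv L) _ _ fun _ => rfl).symm
  rw [hpair, hpair fun p => excess n p.1 p.2 w,
    ← hbij.sum_comp fun p => excess n (p 0) (p 1) w]
  refine Finset.sum_congr rfl fun p _ => ?_
  simp only [excess, subst, formEval_psiF, M, Matrix.mulVec, dotProduct, Fin.sum_univ_two,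
    Matrix.map_apply]

lemma projectiveExcess_subst (n : ℕ) (A : GL (Fin 2) F) (w : QuadPair F) :
    projectiveExcess L n (subst n (A : Matrix (Fin 2) (Fin 2) F) w) = projectiveExcess L n w := by
  have hzero : excess n (0 : L) 0 (subst n (A : Matrix (Fin 2) (Fin 2) F) w) =
      excess n (0 : L) 0 w := by
    simp only [excess, subst, formEval_psiF, mul_zero, add_zero]
  have h := sum_excess_subst (L := L) n A w
  rw [sum_excess, sum_excess, hzero, add_left_inj] at h
  exact mul_left_cancel₀ (natCast_card_sub_one_ne_zero L) h

theorem sum_normalPairs_projectiveExcess [Fintype F] (hL : Module.finrank F L = 2) (n : ℕ) :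
    ∑ w ∈ normalPairs F (n + 1), projectiveExcess L (n + 1) w =
      ((Fintype.card F : ℚ) + 1) * ((Fintype.card F : ℚ) ^ (3 * (n + 1)) *
        ((Fintype.card F : ℚ) - 1) ^ 2) +
      ((Fintype.card F : ℚ) ^ 2 - Fintype.card F) *
        ((-1) ^ (n + 1) * (Fintype.card F : ℚ) ^ (n + 2) * ((Fintype.card F : ℚ) ^ 2 - 1)) := by
  classical
  have hcard : (Fintype.card L : ℚ) = Fintype.card F ^ 2 := by
    rw [← hL, Module.card_eq_pow_finrank (K := F), Nat.cast_pow]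
  have haffine (x : L) : normalExcess F (n + 1) x 1 =
      if x ∈ Set.range (algebraMap F L) then
        (Fintype.card F : ℚ) ^ (3 * (n + 1)) * ((Fintype.card F : ℚ) - 1) ^ 2
      else (-1) ^ (n + 1) * (Fintype.card F : ℚ) ^ (n + 2) * ((Fintype.card F : ℚ) ^ 2 - 1) := by
    split_ifs with hx
    · obtain ⟨z, rfl⟩ := hx
      rw [← normalExcess_algebraMap hL n (u := z) (Or.inr one_ne_zero), map_one]
    · exact normalExcess_of_notMem_range hL hx n
  have hinfinity : normalExcess F (n + 1) (1 : L) 0 =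
      (Fintype.card F : ℚ) ^ (3 * (n + 1)) * ((Fintype.card F : ℚ) - 1) ^ 2 := by
    rw [← normalExcess_algebraMap hL n (v := 0) (Or.inl one_ne_zero), map_one, map_zero]
  simp only [normalExcess] at haffine hinfinity
  simp only [projectiveExcess]
  rw [Finset.sum_add_distrib, Finset.sum_comm, Finset.sum_congr rfl fun x _ => haffine x,
    hinfinity, sum_ite_mem_range_algebraMap, hcard]
  ring

end ProjectiveExcess

end QuadPair

/-! ### Changes of coordinates -/

/-- A change of coordinates `(x, y) ↦ ((a x + b) / (c x + d), (r(x) + e y) / (c x + d) ^ n)` for the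
equations `y ^ 2 + Q y = P` given by forms of degrees `n` and `2 n`. -/
@[ext]
structure CoordChange (F : Type*) [Field F] (n : ℕ) where
  /-- The Möbius transformation of `x`. -/
  matrix : GL (Fin 2) F
  /-- The coefficient `e` of `y`. -/
  factor : Fˣ
  /-- The form `r`. -/
  translation : F[X]
  natDegree_translation_le : translation.natDegree ≤ n

namespace CoordChange

open QuadPair

variable {F : Type*} [Field F] {n : ℕ}

instance : One (CoordChange F n) := ⟨⟨1, 1, 0, by simp⟩⟩

/-- `s * t` is `s` followed by `t`, so that the matrices multiply in the opposite order. -/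
instance : Mul (CoordChange F n) where
  mul s t :=
    { matrix := t.matrix * s.matrix
      factor := t.factor * s.factor
      translation := C (t.factor : F) * s.translation +
        psiF n (s.matrix : Matrix (Fin 2) (Fin 2) F) t.translation
      natDegree_translation_le := natDegree_add_le_of_degree_le
        ((natDegree_C_mul_le _ _).trans s.natDegree_translation_le) (natDegree_psiF_le ..) }

instance : Inv (CoordChange F n) where
  inv t :=
    { matrix := t.matrix⁻¹
      factor := t.factor⁻¹
      translation := -(C (↑t.factor⁻¹ : F) *
        psiF n (↑t.matrix⁻¹ : Matrix (Fin 2) (Fin 2) F) t.translation)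
      natDegree_translation_le := (natDegree_neg _).trans_le
        ((natDegree_C_mul_le _ _).trans (natDegree_psiF_le ..)) }

@[simp] lemma matrix_one : (1 : CoordChange F n).matrix = 1 := rfl
@[simp] lemma factor_one : (1 : CoordChange F n).factor = 1 := rfl
@[simp] lemma translation_one : (1 : CoordChange F n).translation = 0 := rfl

@[simp] lemma matrix_mul (s t : CoordChange F n) : (s * t).matrix = t.matrix * s.matrix := rfl
@[simp] lemma factor_mul (s t : CoordChange F n) : (s * t).factor = t.factor * s.factor := rfl
@[simp] lemma translation_mul (s t : CoordChange F n) :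
    (s * t).translation = C (t.factor : F) * s.translation +
      psiF n (s.matrix : Matrix (Fin 2) (Fin 2) F) t.translation := rfl

@[simp] lemma matrix_inv (t : CoordChange F n) : t⁻¹.matrix = t.matrix⁻¹ := rfl
@[simp] lemma factor_inv (t : CoordChange F n) : t⁻¹.factor = t.factor⁻¹ := rfl
@[simp] lemma translation_inv (t : CoordChange F n) :
    t⁻¹.translation = -(C (↑t.factor⁻¹ : F) *
      psiF n (↑t.matrix⁻¹ : Matrix (Fin 2) (Fin 2) F) t.translation) := rfl

instance : Group (CoordChange F n) := Group.ofLeftAxioms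
  (fun r s t => by
    ext1
    · simp [mul_assoc]
    · simp [mul_assoc]
    · simp only [translation_mul, matrix_mul, factor_mul, Units.val_mul, C_mul, ← psiF_psiF]
      simp only [psiF_eq_formEval, map_add, formEval_C_mul, Polynomial.algebraMap_eq]
      ring)
  (fun t => by
    ext1
    · simp
    · simp
    · simp [psiF_one t.natDegree_translation_le])
  (fun t => by
    ext1
    · simp
    · simp
    · simp [← mul_assoc, ← C_mul])

/-- The equation `y ^ 2 + Q₁ y = P₁` that `t` transforms into the equation `y ^ 2 + Q₂ y = P₂` given
by `v`. -/
def transform (t : CoordChange F n) (v : QuadPair F) : QuadPair F :=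
  scale (C (↑t.factor⁻¹ : F))
    (translate t.translation (subst n (t.matrix : Matrix (Fin 2) (Fin 2) F) v))

lemma transform_one {v : QuadPair F} (hv : HasDegreeLE n v) :
    (1 : CoordChange F n).transform v = v := by
  simp [transform, QuadPair.translate_zero, scale_one, subst_one hv]

lemma transform_mul (s t : CoordChange F n) (v : QuadPair F) :
    (s * t).transform v = s.transform (t.transform v) := by
  have hfactor : C (↑t.factor⁻¹ : F) * (C (t.factor : F) * s.translation) = s.translation := by
    rw [← mul_assoc, ← C_mul, Units.inv_mul, C_1, one_mul]
  have hsubst : HasDegreeLE n (subst n (t.matrix : Matrix (Fin 2) (Fin 2) F) v) := .subst ..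
  rw [transform, transform, transform,
    subst_scale_C _ _ (hsubst.translate t.natDegree_translation_le),
    subst_translate _ hsubst t.natDegree_translation_le, subst_subst, ← hfactor, ← scale_translate,
    QuadPair.translate_translate, scale_scale, ← C_mul]
  simp

lemma isNormal_transform (t : CoordChange F n) {v : QuadPair F} (hv : IsNormal n v) :
    IsNormal n (t.transform v) :=
  ((hv.subst t.matrix).translate t.natDegree_translation_le).scale_C (Units.ne_zero _)

lemma projectiveExcess_transform {L : Type*} [Field L] [Fintype L] [Algebra F L]
    (t : CoordChange F n) (v : QuadPair F) :
    projectiveExcess L n (t.transform v) = projectiveExcess L n v := by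
  have hsubst : HasDegreeLE n (subst n (t.matrix : Matrix (Fin 2) (Fin 2) F) v) := .subst ..
  rw [transform, projectiveExcess_scale_C (hsubst.translate t.natDegree_translation_le)
      (Units.ne_zero _), projectiveExcess_translate hsubst t.natDegree_translation_le,
    projectiveExcess_subst]

lemma isoTriple_iff {g : ℕ} {A : GL (Fin 2) F} {e : F} {r : F[X]} {v₁ v₂ : QuadPair F} :
    IsoTriple g (A : Matrix (Fin 2) (Fin 2) F) e r v₁.1 v₁.2 v₂.1 v₂.2 ↔
      ∃ t : CoordChange F (g + 1),
        t.matrix = A ∧ t.factor = e ∧ t.translation = r ∧ t.transform v₂ = v₁ := by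
  have hscale (e : Fˣ) (w : QuadPair F) :
      scale (C (↑e⁻¹ : F)) w = v₁ ↔ scale (C (e : F)) v₁ = w := by
    constructor <;> rintro rfl <;> rw [scale_scale, ← C_mul] <;> simp [scale_one]
  have htriple : C e * v₁.1 = 2 * r + psiF (g + 1) (A : Matrix (Fin 2) (Fin 2) F) v₂.1 ∧
      C (e ^ 2) * v₁.2 = psiF (2 * g + 2) (A : Matrix (Fin 2) (Fin 2) F) v₂.2 - r ^ 2 -
        psiF (g + 1) (A : Matrix (Fin 2) (Fin 2) F) v₂.1 * r ↔
      scale (C e) v₁ = translate r (subst (g + 1) (A : Matrix (Fin 2) (Fin 2) F) v₂) := by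
    rw [Prod.ext_iff, add_comm (2 * r), C_pow]
    rfl
  rw [IsoTriple, htriple]
  constructor
  · rintro ⟨he, hr, h⟩
    exact ⟨⟨A, Units.mk0 e he, r, hr⟩, rfl, rfl, rfl, (hscale _ _).2 h⟩
  · rintro ⟨t, rfl, rfl, rfl, h⟩
    exact ⟨t.factor.ne_zero, t.natDegree_translation_le, (hscale _ _).1 h⟩

section Action

variable [PerfectField F] {g : ℕ}

instance : MulAction (CoordChange F (g + 1)) (HypEq F g) where
  smul t c := ⟨t.transform c.1, isHypModel_iff.2 (t.isNormal_transform (isHypModel_iff.1 c.2))⟩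
  one_smul c := Subtype.ext (transform_one (isHypModel_iff.1 c.2).1)
  mul_smul s t c := Subtype.ext (transform_mul s t c.1)

lemma coe_smul (t : CoordChange F (g + 1)) (c : HypEq F g) : (t • c).1 = t.transform c.1 := rfl

lemma isomRel_iff {c₁ c₂ : HypEq F g} :
    IsomRel g c₁ c₂ ↔ c₁ ∈ MulAction.orbit (CoordChange F (g + 1)) c₂ := by
  simp only [IsomRel, isoTriple_iff]
  constructor
  · rintro ⟨-, -, -, t, -, -, -, h⟩
    exact ⟨t, Subtype.ext h⟩
  · rintro ⟨t, rfl⟩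
    exact ⟨_, _, _, t, rfl, rfl, rfl, rfl⟩

lemma natCard_autTriples (c : HypEq F g) :
    Nat.card (AutTriples g c) = Nat.card (MulAction.stabilizer (CoordChange F (g + 1)) c) := by
  symm
  refine Nat.card_eq_of_bijective (fun t => ⟨(t.1.matrix, t.1.factor, t.1.translation),
    isoTriple_iff.2 ⟨t.1, rfl, rfl, rfl, congrArg Subtype.val t.2⟩⟩) ⟨fun s t h => ?_, ?_⟩
  · obtain ⟨hmatrix, h⟩ := Prod.ext_iff.1 (congrArg Subtype.val h)
    obtain ⟨hfactor, htranslation⟩ := Prod.ext_iff.1 h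
    exact Subtype.ext (CoordChange.ext hmatrix (Units.ext hfactor) htranslation)
  · rintro ⟨⟨A, e, r⟩, h⟩
    obtain ⟨t, rfl, rfl, rfl, ht⟩ := isoTriple_iff.1 h
    exact ⟨⟨t, Subtype.ext ht⟩, rfl⟩

end Action

section Finite

variable (F n) in
/-- The coordinates of a change of coordinates. -/
def equivProd : CoordChange F n ≃ GL (Fin 2) F × Fˣ × {p : F[X] // p.natDegree ≤ n} where
  toFun t := (t.matrix, t.factor, ⟨t.translation, t.natDegree_translation_le⟩)
  invFun x := ⟨x.1, x.2.1, x.2.2.1, x.2.2.2⟩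
  left_inv _ := rfl
  right_inv _ := rfl

instance [Finite F] : Finite (CoordChange F n) := by
  have : Finite {p : F[X] // p.natDegree ≤ n} := (finite_setOf_natDegree_le F n).to_subtype
  exact .of_equiv _ (equivProd F n).symm

lemma natCast_natCard [Fintype F] : (Nat.card (CoordChange F n) : ℚ) =
    ((Fintype.card F : ℚ) ^ 2 - 1) * ((Fintype.card F : ℚ) ^ 2 - Fintype.card F) *
      ((Fintype.card F - 1) * (Fintype.card F : ℚ) ^ (n + 1)) := by
  have hforms : Nat.card {p : F[X] // p.natDegree ≤ n} = Fintype.card F ^ (n + 1) := by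
    rw [← card_forms]
    exact Nat.subtype_card _ fun _ => mem_forms
  have hq : 1 ≤ Fintype.card F := Fintype.card_pos
  rw [Nat.card_congr (equivProd F n), Nat.card_prod, Nat.card_prod, hforms,
    Matrix.card_GL_field, Fin.prod_univ_two, Nat.card_units, Nat.card_eq_fintype_card]
  push_cast [Nat.cast_sub hq, Nat.cast_sub (Nat.one_le_pow 2 _ hq),
    Nat.cast_sub (Nat.le_self_pow two_ne_zero (Fintype.card F)), Fin.val_zero, Fin.val_one,
    pow_zero, pow_one]
  ring

end Finite

end CoordChange

/-! ### Mass formulas -/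

section Mass

variable {G X K : Type*} [Group G] [Finite G] [MulAction G X] [Finite X] [Field K] [CharZero K]

lemma finsum_quot_div_card_stabilizer {r : X → X → Prop}
    (hr : ∀ x y, r x y ↔ x ∈ MulAction.orbit G y) {f : X → K} (hf : ∀ (s : G) x, f (s • x) = f x) :
    ∑ᶠ c : Quot r, f (Quot.out c) / Nat.card (MulAction.stabilizer G (Quot.out c)) =
      (∑ᶠ x, f x) / Nat.card G := by
  classical
  obtain rfl : r = (MulAction.orbitRel G X).r := by
    ext x y
    exact hr x y
  let := Fintype.ofFinite X
  let := Fintype.ofFinite G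
  let := Fintype.ofFinite (MulAction.orbitRel.Quotient G X)
  change ∑ᶠ c : MulAction.orbitRel.Quotient G X,
    f c.out / Nat.card (MulAction.stabilizer G c.out) = _
  rw [finsum_eq_sum_of_fintype, finsum_eq_sum_of_fintype,
    ← (MulAction.selfEquivSigmaOrbits G X).symm.sum_comp, Fintype.sum_sigma, Finset.sum_div]
  refine Finset.sum_congr rfl fun c _ => ?_
  have horbit (x : MulAction.orbit G c.out) : f x = f c.out := by
    obtain ⟨-, s, rfl⟩ := x
    exact hf s _
  have hcard : (Nat.card (MulAction.orbit G c.out) * Nat.card (MulAction.stabilizer G c.out) : K) =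
      Nat.card G := by
    simp only [Nat.card_eq_fintype_card]
    exact_mod_cast MulAction.card_orbit_mul_card_stabilizer_eq_card_group G c.out
  have := (MulAction.nonempty_orbit (M := G) c.out).to_subtype
  calc f c.out / Nat.card (MulAction.stabilizer G c.out)
      = Nat.card (MulAction.orbit G c.out) * f c.out / Nat.card G := by
        rw [← hcard, mul_div_mul_left _ _ (Nat.cast_ne_zero.2 Nat.card_pos.ne')]
    _ = (∑ x : MulAction.orbit G c.out, f x) / Nat.card G := by
        simp [horbit]

end Mass

section HypEq

variable (F : Type*) [Field F] [Finite F] (g : ℕ)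

/-- The models of hyperelliptic curves of genus `g` are the normal pairs of degrees `g + 1` and
`2 * g + 2`. -/
def hypEqEquivNormalPairs : HypEq F g ≃ QuadPair.normalPairs F (g + 1) :=
  Equiv.subtypeEquivRight fun _ => QuadPair.isHypModel_iff.trans QuadPair.mem_normalPairs.symm

instance : Finite (HypEq F g) := .of_equiv _ (hypEqEquivNormalPairs F g).symm

lemma finsum_hypEq {M : Type*} [AddCommMonoid M] (f : QuadPair F → M) :
    ∑ᶠ c : HypEq F g, f c.1 = ∑ v ∈ QuadPair.normalPairs F (g + 1), f v := by
  rw [← Finset.sum_coe_sort, ← finsum_eq_sum_of_fintype]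
  exact finsum_comp_equiv (hypEqEquivNormalPairs F g) (f := fun v => f v)

end HypEq

theorem stmt_16_general {F L : Type*} [Field F] [Fintype F] [Field L] [Algebra F L]
    (hL : Module.finrank F L = 2) (g : ℕ) :
    ∑ᶠ c : HypClass F g,
      ((Fintype.card F : ℚ) - 1) / (Nat.card (AutTriples g (Quot.out c)) : ℚ) *
        (((Fintype.card F : ℚ) ^ 2 + 1) -
          (nPoints g L (Quot.out c).1.1 (Quot.out c).1.2 : ℚ)) =
      (-1) ^ g - (Fintype.card F : ℚ) ^ (2 * g) := by
  have := Module.finite_of_finrank_eq_succ hL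
  have := Module.finite_of_finite F (M := L)
  let := Fintype.ofFinite L
  set q := (Fintype.card F : ℚ)
  have hpoints (c : HypEq F g) : q ^ 2 + 1 - nPoints g L c.1.1 c.1.2 =
      -QuadPair.projectiveExcess L (g + 1) c.1 := by
    rw [QuadPair.natCast_nPoints (QuadPair.isHypModel_iff.1 c.2).1,
      Module.card_eq_pow_finrank (K := F) (V := L), hL, Nat.cast_pow]
    ring
  have hgroup : (Nat.card (CoordChange F (g + 1)) : ℚ) ≠ 0 := Nat.cast_ne_zero.2 Nat.card_pos.ne'
  let f (v : QuadPair F) : ℚ := (q - 1) * -QuadPair.projectiveExcess L (g + 1) v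
  have hf (t : CoordChange F (g + 1)) (c : HypEq F g) : f (t • c).1 = f c.1 := by
    simp only [f, CoordChange.coe_smul, CoordChange.projectiveExcess_transform]
  simp only [hpoints, CoordChange.natCard_autTriples, div_mul_eq_mul_div]
  calc ∑ᶠ c : Quot (IsomRel g), f c.out.1 /
        Nat.card (MulAction.stabilizer (CoordChange F (g + 1)) c.out)
      = (∑ᶠ c : HypEq F g, f c.1) / Nat.card (CoordChange F (g + 1)) :=
        finsum_quot_div_card_stabilizer (f := fun c : HypEq F g => f c.1)
          (fun _ _ => CoordChange.isomRel_iff) hf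
    _ = (-1) ^ g - q ^ (2 * g) := by
        rw [finsum_hypEq, ← Finset.mul_sum, Finset.sum_neg_distrib,
          QuadPair.sum_normalPairs_projectiveExcess hL, div_eq_iff hgroup,
          CoordChange.natCast_natCard]
        ring

/-- Bergström's formula, verified for q = 2, g = 5 in the paper: for any
finite field F = F_q and any g ≥ 2, the weighted sum over the F_q-isomorphism classes of
hyperelliptic curves of genus g of a₂(C)/|Aut_{F_q}(C)|, where
a₂(C) = q² + 1 − |C(F_{q²})| and F_{q²} is the quadratic extension of F_q, equals
(−1)^g − q^{2g}; in particular for q = 2 and g = 5 it equals −1025. -/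
theorem stmt_16 (F : Type) [Field F] [Fintype F] (g : ℕ) (hg : 2 ≤ g)
    (F2 : Type) [Field F2] [Algebra F F2] (h2 : Module.finrank F F2 = 2) :
    ∑ᶠ c : HypClass F g,
      ((Fintype.card F : ℚ) - 1) / (Nat.card (AutTriples g (Quot.out c)) : ℚ) *
        (((Fintype.card F : ℚ) ^ 2 + 1) -
          (nPoints g F2 (Quot.out c).1.1 (Quot.out c).1.2 : ℚ)) =
      (-1) ^ g - (Fintype.card F : ℚ) ^ (2 * g) := by
  exact stmt_16_general h2 g

end
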